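/- arXiv:2003.07563 — 7 statements merged into one kernel-verified Lean document; each statement's English description precedes it below -/
import Mathlib

section
/- For every uniformly bounded orthonormal system Φ on [0,1] there exists a function f ∈ L¹[0,1] such that the set of points x ∈ [0,1] at which sup_{m≥1} |S_m(f,x)| = ∞ (i.e. the Fourier series of f with respect to Φ diverges unboundedly) has positive Lebesgue measure. -/
open MeasureTheory Set Filter

/-- `φ` (indexed from `1`) is an orthonormal system on `[0,1]`:
`∫_0^1 φ_n φ_m = δ_{nm}`. -/
def IsONS (φ : ℕ → ℝ → ℝ) : Prop :=
  (∀ n, 1 ≤ n → Measurable (φ n)) ∧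
  ∀ n m, 1 ≤ n → 1 ≤ m →
    (∫ t in Set.Icc (0:ℝ) 1, φ n t * φ m t) = if n = m then 1 else 0

/-- `φ` is uniformly bounded by `M` on `[0,1]`. -/
def UnifBounded (φ : ℕ → ℝ → ℝ) (M : ℝ) : Prop :=
  0 < M ∧ ∀ n, 1 ≤ n → ∀ᵐ t ∂(volume.restrict (Set.Icc (0:ℝ) 1)), |φ n t| ≤ M

/-- Fourier coefficient `c_n(f) = ∫_0^1 f φ_n`. -/
noncomputable def fourierCoef (φ : ℕ → ℝ → ℝ) (f : ℝ → ℝ) (n : ℕ) : ℝ :=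
  ∫ t in Set.Icc (0:ℝ) 1, f t * φ n t

/-- Partial sum `S_m(f,x) = ∑_{n=1}^m c_n(f) φ_n(x)`. -/
noncomputable def partialSum (φ : ℕ → ℝ → ℝ) (f : ℝ → ℝ) (m : ℕ) (x : ℝ) : ℝ :=
  ∑ n ∈ Finset.Icc 1 m, fourierCoef φ f n * φ n x

section BoundedSystems

variable {Ω : Type*} [MeasurableSpace Ω] {μ : Measure Ω}

/-- Total weight of the dyadic blocks inside `[a, a + 2 ^ k]` over which `s` has average increment
at least `η`; a block of length `2 ^ i` has weight `4 ^ i`. -/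
noncomputable def oscWeight (η : ℝ) (s : ℕ → ℝ) : ℕ → ℕ → ℝ
  | 0, a => if η * 2 ^ 0 ≤ |s (a + 2 ^ 0) - s a| then 4 ^ 0 else 0
  | k + 1, a => (if η * 2 ^ (k + 1) ≤ |s (a + 2 ^ (k + 1)) - s a| then 4 ^ (k + 1) else 0) +
      (oscWeight η s k a + oscWeight η s k (a + 2 ^ k))

theorem oscWeight_le (η : ℝ) (s : ℕ → ℝ) (k a : ℕ) : oscWeight η s k a ≤ 2 * 4 ^ k := by
  induction k generalizing a with
  | zero => simp only [oscWeight]; split_ifs <;> norm_num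
  | succ k ih =>
    have h1 := ih a
    have h2 := ih (a + 2 ^ k)
    have h4 : (0 : ℝ) < 4 ^ k := by positivity
    simp only [oscWeight]
    split_ifs <;> rw [pow_succ] <;> linarith

theorem sum_abs_ge_of_increment {s : ℕ → ℝ} {Λ : ℝ} (hΛ : 0 < Λ)
    (hs : ∀ n, |s (n + 1) - s n| ≤ Λ) {n a : ℕ} {h : ℝ} (h0 : 0 ≤ h) (hn : h ≤ 4 * Λ * n)
    (hb : h ≤ |s (a + n) - s a|) :
    h ^ 2 / (8 * Λ) ≤ ∑ i ∈ Finset.range n, (|s (a + i)| + |s (a + i + 1)|) := by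
  have hlip : ∀ a i, |s (a + i) - s a| ≤ Λ * i := by
    intro a i
    induction i with
    | zero => simp
    | succ i ih =>
      have h1 := hs (a + i)
      have h2 := abs_sub_le (s (a + (i + 1))) (s (a + i)) (s a)
      push_cast
      rw [← add_assoc] at h2 ⊢
      linarith
  have hrefl : ∑ i ∈ Finset.range n, (|s (a + i)| + |s (a + i + 1)|)
      = ∑ i ∈ Finset.range n, (|s (a + i)| + |s (a + (n - i))|) := by
    rw [Finset.sum_add_distrib, Finset.sum_add_distrib]
    congr 1
    rw [← Finset.sum_range_reflect]
    refine Finset.sum_congr rfl fun i hi => ?_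
    have := Finset.mem_range.1 hi
    congr 2
    omega
  rw [hrefl]
  set q := ⌈h / (4 * Λ)⌉₊ with hq
  have hqn : q ≤ n := by
    rw [hq, Nat.ceil_le, div_le_iff₀ (by positivity)]
    linarith
  have hterm : ∀ i ∈ Finset.range q, h / 2 ≤ |s (a + i)| + |s (a + (n - i))| := by
    intro i hi
    have hi' : (i : ℝ) < h / (4 * Λ) := Nat.lt_ceil.1 (Finset.mem_range.1 hi)
    rw [lt_div_iff₀ (by positivity)] at hi'
    have hin : i ≤ n := (Finset.mem_range.1 hi).le.trans hqn
    have e1 := hlip a i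
    have e2 := hlip (a + (n - i)) i
    rw [show a + (n - i) + i = a + n by omega] at e2
    have e3 := abs_sub_le (s (a + n)) (s (a + (n - i))) (s a)
    have e4 := abs_sub_le (s (a + (n - i))) (s (a + i)) (s a)
    have e5 := abs_sub (s (a + (n - i))) (s (a + i))
    linarith
  calc h ^ 2 / (8 * Λ) = h / (4 * Λ) * (h / 2) := by field_simp; ring
    _ ≤ q * (h / 2) := by
        gcongr
        exact Nat.le_ceil _
    _ = ∑ i ∈ Finset.range q, h / 2 := by simp
    _ ≤ ∑ i ∈ Finset.range q, (|s (a + i)| + |s (a + (n - i))|) := Finset.sum_le_sum hterm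
    _ ≤ _ := Finset.sum_le_sum_of_subset_of_nonneg (by simpa using hqn)
        fun _ _ _ => by positivity

theorem oscWeight_le_sum {s : ℕ → ℝ} {Λ η : ℝ} (hΛ : 0 < Λ) (hη : 0 ≤ η) (hηΛ : η ≤ 4 * Λ)
    (hs : ∀ n, |s (n + 1) - s n| ≤ Λ) (k a : ℕ) :
    η ^ 2 / (16 * Λ) * oscWeight η s k a ≤
      ∑ i ∈ Finset.range (2 ^ k), (|s (a + i)| + |s (a + i + 1)|) := by
  have key : ∀ k a : ℕ, η * 2 ^ k ≤ |s (a + 2 ^ k) - s a| →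
      η ^ 2 / (16 * Λ) * oscWeight η s k a ≤
      ∑ i ∈ Finset.range (2 ^ k), (|s (a + i)| + |s (a + i + 1)|) := by
    intro k a hk
    have h1 := sum_abs_ge_of_increment hΛ hs (n := 2 ^ k) (a := a) (h := η * 2 ^ k)
      (by positivity) (by push_cast; gcongr) hk
    refine le_trans ?_ h1
    calc η ^ 2 / (16 * Λ) * oscWeight η s k a ≤ η ^ 2 / (16 * Λ) * (2 * 4 ^ k) := by
          gcongr
          exact oscWeight_le η s k a
      _ = (η * 2 ^ k) ^ 2 / (8 * Λ) := by
          rw [mul_pow, ← pow_mul, mul_comm k 2, pow_mul]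
          field_simp
          ring
  induction k generalizing a with
  | zero =>
    by_cases h : η * 2 ^ 0 ≤ |s (a + 2 ^ 0) - s a|
    · exact key 0 a h
    · simp only [oscWeight, if_neg h, mul_zero]
      positivity
  | succ k ih =>
    by_cases h : η * 2 ^ (k + 1) ≤ |s (a + 2 ^ (k + 1)) - s a|
    · exact key _ a h
    · have h1 := ih a
      have h2 := ih (a + 2 ^ k)
      simp only [oscWeight, if_neg h, zero_add]
      rw [pow_succ 2 k, mul_two, Finset.sum_range_add, mul_add]
      simp only [add_assoc] at h1 h2 ⊢
      exact add_le_add h1 h2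

theorem integrable_of_abs_le [IsFiniteMeasure μ] {f : Ω → ℝ} (hf : Measurable f) {C : ℝ}
    (hC : ∀ x, |f x| ≤ C) : Integrable f μ :=
  Integrable.of_bound hf.aestronglyMeasurable C (ae_of_all _ hC)

/-- `e` is an orthonormal system of measurable functions in `L²(μ)` bounded everywhere by `M`. -/
structure BoundedONS (μ : Measure Ω) (M : ℝ) (e : ℕ → Ω → ℝ) : Prop where
  measurable : ∀ n, Measurable (e n)
  abs_le : ∀ n x, |e n x| ≤ M
  integral_mul : ∀ n m, ∫ x, e n x * e m x ∂μ = if n = m then 1 else 0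

namespace BoundedONS
variable {M : ℝ} {e : ℕ → Ω → ℝ}

theorem shift (he : BoundedONS μ M e) (m : ℕ) : BoundedONS μ M fun n => e (m + n) :=
  ⟨fun n => he.measurable _, fun n => he.abs_le _, fun n k => by simp [he.integral_mul]⟩

theorem one_le_bound [IsProbabilityMeasure μ] (he : BoundedONS μ M e) : 1 ≤ M := by
  obtain ⟨x⟩ : Nonempty Ω := nonempty_of_isProbabilityMeasure μ
  have hM : 0 ≤ M := (abs_nonneg _).trans (he.abs_le 0 x)
  have h1 : ∫ x, e 0 x * e 0 x ∂μ ≤ M ^ 2 := by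
    have : ∀ x, ‖e 0 x * e 0 x‖ ≤ M ^ 2 := fun x => by
      rw [Real.norm_eq_abs, abs_mul, sq]
      exact mul_le_mul (he.abs_le 0 x) (he.abs_le 0 x) (abs_nonneg _) hM
    have h := norm_integral_le_of_norm_le_const (μ := μ) (ae_of_all _ this)
    simp only [probReal_univ, mul_one] at h
    exact (le_abs_self _).trans h
  rw [he.integral_mul, if_pos rfl] at h1
  nlinarith

theorem integral_sq_sum [IsFiniteMeasure μ] (he : BoundedONS μ M e) (d : ℕ → ℝ) (F : Finset ℕ) :
    ∫ x, (∑ n ∈ F, d n * e n x) ^ 2 ∂μ = ∑ n ∈ F, d n ^ 2 := by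
  have hint : ∀ n m, Integrable (fun x => d n * e n x * (d m * e m x)) μ := fun n m => by
    have := he.measurable n
    have := he.measurable m
    refine integrable_of_abs_le (C := |d n| * M * (|d m| * M)) (by fun_prop) fun x => ?_
    have h1 := he.abs_le n x
    have h2 := he.abs_le m x
    have hM := (abs_nonneg _).trans h1
    rw [abs_mul, abs_mul, abs_mul]
    gcongr
  simp_rw [sq, Finset.sum_mul_sum]
  rw [integral_finsetSum _ fun n _ => integrable_finsetSum _ fun m _ => hint n m]
  refine Finset.sum_congr rfl fun n hn => ?_
  rw [integral_finsetSum _ fun m _ => hint n m]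
  have : ∀ m, ∫ x, d n * e n x * (d m * e m x) ∂μ = d n * d m * if n = m then 1 else 0 := by
    intro m
    rw [← he.integral_mul, ← integral_const_mul]
    congr with x
    ring
  simp [this, hn]

/-- An orthonormal sum of length `2 ^ K` with bounded coefficients, not small in the mean, has a
partial sum with large `L¹` norm. -/
theorem exists_lt_integral_abs_sum [IsProbabilityMeasure μ] {M L : ℝ} (hL : 1 ≤ L) {K : ℕ}
    {e : ℕ → Ω → ℝ}
    (hK : 2 * L * (64 * M ^ 6 * (64 * L ^ 2)) < K + 1) (he : BoundedONS μ M e)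
    {d : ℕ → ℝ} (hd : ∀ n, |d n| ≤ M)
    (hsum : (2 : ℝ) ^ K / 2 ≤ ∑ n ∈ Finset.range (2 ^ K), d n ^ 2) :
    ∃ r ≤ 2 ^ K, L < ∫ x, |∑ n ∈ Finset.range r, d n * e n x| ∂μ := by
  by_contra! hcon
  have hM1 := he.one_le_bound
  set s : Ω → ℕ → ℝ := fun x r => ∑ n ∈ Finset.range r, d n * e n x with hsdef
  have hmeas := he.measurable
  have hsmeas : ∀ r, Measurable fun x => s x r := fun r => by
    simp only [hsdef]
    fun_prop
  have hinc : ∀ x n, |s x (n + 1) - s x n| ≤ M ^ 2 := by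
    intro x n
    simp only [hsdef, Finset.sum_range_succ, add_sub_cancel_left]
    rw [abs_mul, sq]
    exact mul_le_mul (hd n) (he.abs_le n x) (abs_nonneg _) (by linarith)
  have hdiff : ∀ x a n, |s x (a + n) - s x a| ≤ M ^ 2 * n := by
    intro x a n
    induction n with
    | zero => simp
    | succ i ih =>
      have h1 := hinc x (a + i)
      have h2 := abs_sub_le (s x (a + (i + 1))) (s x (a + i)) (s x a)
      push_cast
      rw [← add_assoc] at h2 ⊢
      linarith
  have hsint : ∀ r, Integrable (fun x => s x r) μ := fun r =>
    integrable_of_abs_le (hsmeas r) (C := M ^ 2 * r) fun x => by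
      simpa [hsdef] using hdiff x 0 r
  set η : ℝ := 1 / (8 * L) with hη
  have hη0 : 0 < η := by positivity
  have hηL : 2 * L * η = 1 / 4 := by rw [hη]; field_simp; norm_num
  have hWmeas : ∀ k a, Measurable fun x => oscWeight η (s x) k a := by
    intro k
    induction k with
    | zero =>
      intro a
      simp only [oscWeight]
      exact Measurable.ite (measurableSet_le measurable_const
        ((hsmeas _).sub (hsmeas _)).abs) measurable_const measurable_const
    | succ k ih =>
      intro a
      simp only [oscWeight]
      exact (Measurable.ite (measurableSet_le measurable_const
        ((hsmeas _).sub (hsmeas _)).abs) measurable_const measurable_const).add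
        ((ih a).add (ih _))
  have hW0 : ∀ x k a, 0 ≤ oscWeight η (s x) k a := by
    intro x k
    induction k with
    | zero => intro a; simp only [oscWeight]; positivity
    | succ k ih =>
      intro a
      have h1 := ih a
      have h2 := ih (a + 2 ^ k)
      simp only [oscWeight]
      positivity
  have hWint : ∀ k a, Integrable (fun x => oscWeight η (s x) k a) μ := fun k a =>
    integrable_of_abs_le (hWmeas k a) (C := 2 * 4 ^ k) fun x => by
      rw [abs_of_nonneg (hW0 x k a)]
      exact oscWeight_le _ _ _ _
  have habs : ∀ q r, Integrable (fun x => |s x q| + |s x r|) μ := fun q r =>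
    (hsint q).abs.add (hsint r).abs
  have hWadd : ∀ k a b, Integrable
      (fun x => oscWeight η (s x) k a + oscWeight η (s x) k b) μ := fun k a b =>
    (hWint k a).add (hWint k b)
  have hind : ∀ k a, Integrable
      (fun x => if η * 2 ^ k ≤ |s x (a + 2 ^ k) - s x a| then (4 : ℝ) ^ k else 0) μ := fun k a =>
    integrable_of_abs_le (Measurable.ite (measurableSet_le measurable_const
        ((hsmeas _).sub (hsmeas _)).abs) measurable_const measurable_const) (C := 4 ^ k)
      fun x => by split_ifs <;> simp
  have hone : ∀ k a, a + 2 ^ k ≤ 2 ^ K →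
      ∑ n ∈ Finset.Ico a (a + 2 ^ k), d n ^ 2 - 2 ^ k / 4 ≤ M ^ 4 *
        ∫ x, (if η * 2 ^ k ≤ |s x (a + 2 ^ k) - s x a| then (4 : ℝ) ^ k else 0) ∂μ := by
    intro k a hak
    have hb : ∀ x, s x (a + 2 ^ k) - s x a = ∑ n ∈ Finset.Ico a (a + 2 ^ k), d n * e n x := by
      intro x
      rw [Finset.sum_Ico_eq_sub _ (Nat.le_add_right _ _)]
    rw [← he.integral_sq_sum d]
    simp_rw [← hb]
    have hpt : ∀ x, (s x (a + 2 ^ k) - s x a) ^ 2 ≤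
        M ^ 4 * (if η * 2 ^ k ≤ |s x (a + 2 ^ k) - s x a| then (4 : ℝ) ^ k else 0) +
        η * 2 ^ k * (|s x (a + 2 ^ k)| + |s x a|) := by
      intro x
      have h1 := hdiff x a (2 ^ k)
      push_cast at h1
      rw [← sq_abs]
      split_ifs with h
      · have : |s x (a + 2 ^ k) - s x a| ^ 2 ≤ (M ^ 2 * 2 ^ k) ^ 2 := by gcongr
        have h4 : (4 : ℝ) ^ k = (2 ^ k) ^ 2 := by rw [← pow_mul, mul_comm k 2, pow_mul]; norm_num
        have : 0 ≤ η * 2 ^ k * (|s x (a + 2 ^ k)| + |s x a|) := by positivity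
        rw [h4]
        nlinarith
      · push Not at h
        have h2 := abs_sub (s x (a + 2 ^ k)) (s x a)
        rw [sq, mul_zero, zero_add]
        gcongr
    have hint1 := integral_mono (μ := μ)
      (f := fun x => (s x (a + 2 ^ k) - s x a) ^ 2) ?_ ?_ hpt
    · rw [integral_add ((hind k a).const_mul _)
        ((habs _ _).const_mul _), integral_const_mul, integral_const_mul,
        integral_add (hsint _).abs (hsint _).abs] at hint1
      have h1 := hcon (a + 2 ^ k) hak
      have h2 := hcon a ((Nat.le_add_right _ _).trans hak)
      have h3 : η * 2 ^ k * (∫ x, |s x (a + 2 ^ k)| ∂μ + ∫ x, |s x a| ∂μ) ≤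
          η * 2 ^ k * (L + L) := by
        gcongr
      have h4 : η * 2 ^ k * (L + L) = 2 ^ k / 4 := by
        linear_combination (2 ^ k : ℝ) * hηL
      linarith
    · refine integrable_of_abs_le (((hsmeas _).sub (hsmeas _)).pow_const 2)
        (C := (M ^ 2 * (2 ^ k : ℕ)) ^ 2) fun x => ?_
      rw [abs_pow]
      have := hdiff x a (2 ^ k)
      gcongr
    · exact ((hind k a).const_mul _).add ((habs _ _).const_mul _)
  have hlow : ∀ k a, a + 2 ^ k ≤ 2 ^ K →
      (k + 1) * (∑ n ∈ Finset.Ico a (a + 2 ^ k), d n ^ 2 - 2 ^ k / 4) ≤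
        M ^ 4 * ∫ x, oscWeight η (s x) k a ∂μ := by
    intro k
    induction k with
    | zero =>
      intro a ha
      have := hone 0 a ha
      simpa only [oscWeight, Nat.cast_zero, zero_add, one_mul] using this
    | succ k ih =>
      intro a ha
      rw [pow_succ, mul_two] at ha
      have hpos : 0 < 2 ^ k := by positivity
      have h0 := hone (k + 1) a (by rw [pow_succ]; omega)
      have h1 := ih a (by omega)
      have h2 := ih (a + 2 ^ k) (by omega)
      have hsplit := Finset.sum_Ico_consecutive (fun n => d n ^ 2)
        (show a ≤ a + 2 ^ k by omega) (show a + 2 ^ k ≤ a + 2 ^ k + 2 ^ k by omega)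
      simp only [oscWeight]
      rw [integral_add (hind _ _) (hWadd k _ _),
        integral_add (hWint k a) (hWint k _)]
      have e1 : a + 2 ^ (k + 1) = a + 2 ^ k + 2 ^ k := by rw [pow_succ]; omega
      rw [e1] at h0 ⊢
      rw [← hsplit] at h0 ⊢
      push_cast
      rw [pow_succ (2 : ℝ)] at h0 ⊢
      nlinarith
  have hfin := hlow K 0 (by simp)
  have hup : η ^ 2 / (16 * M ^ 2) * ∫ x, oscWeight η (s x) K 0 ∂μ ≤ 2 ^ K * (2 * L) := by
    rw [← integral_const_mul]
    have hpt : ∀ x, η ^ 2 / (16 * M ^ 2) * oscWeight η (s x) K 0 ≤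
        ∑ i ∈ Finset.range (2 ^ K), (|s x (0 + i)| + |s x (0 + i + 1)|) := fun x =>
      oscWeight_le_sum (by positivity) hη0.le (by
        have : η ≤ 1 := by rw [hη, div_le_one (by positivity)]; linarith
        nlinarith) (hinc x) K 0
    refine (integral_mono ((hWint K 0).const_mul _) (integrable_finsetSum _ fun i _ =>
      habs _ _) hpt).trans ?_
    rw [integral_finsetSum _ fun i _ => habs _ _]
    calc _ ≤ ∑ i ∈ Finset.range (2 ^ K), 2 * L := by
          refine Finset.sum_le_sum fun i hi => ?_
          have hi := Finset.mem_range.1 hi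
          rw [integral_add (hsint _).abs (hsint _).abs]
          have h1 := hcon (0 + i) (by omega)
          have h2 := hcon (0 + i + 1) (by omega)
          linarith
      _ = _ := by simp
  set I := ∫ x, oscWeight η (s x) K 0 ∂μ
  rw [zero_add, ← Finset.range_eq_Ico] at hfin
  have h2K : (0 : ℝ) < 2 ^ K := by positivity
  have h5 : (K + 1) * ((2 : ℝ) ^ K / 4) ≤ M ^ 4 * I := by
    refine le_trans ?_ hfin
    gcongr
    linarith
  have hI : I ≤ 2 ^ K * (2 * L) * (16 * M ^ 2 * (64 * L ^ 2)) := by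
    have : η ^ 2 / (16 * M ^ 2) = 1 / (16 * M ^ 2 * (64 * L ^ 2)) := by
      rw [hη]; field_simp; norm_num
    rw [this, one_div, inv_mul_le_iff₀ (by positivity)] at hup
    linarith
  have h6 : M ^ 4 * I ≤ M ^ 4 * (2 ^ K * (2 * L) * (16 * M ^ 2 * (64 * L ^ 2))) := by gcongr
  have h7 : (2 : ℝ) ^ K * (2 * L * (64 * M ^ 6 * (64 * L ^ 2))) < 2 ^ K * (K + 1) := by gcongr
  nlinarith

end BoundedONS

/-- A bounded sequence of nonnegative functions has a weak limit along any ultrafilter. -/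
theorem exists_weak_limit [IsProbabilityMeasure μ] {ι : Type*} (l : Ultrafilter ι)
    {f : ι → Ω → ℝ} {Λ : ℝ} (hf : ∀ m, Measurable (f m)) (h0 : ∀ m x, 0 ≤ f m x)
    (hΛ : ∀ m x, f m x ≤ Λ) :
    ∃ w : Ω → ℝ, Measurable w ∧ (∀ x, 0 ≤ w x) ∧ (∀ x, w x ≤ Λ) ∧
      ∀ h : Ω → ℝ, Measurable h → ∀ C, (∀ x, |h x| ≤ C) →
        Tendsto (fun m => ∫ x, f m x * h x ∂μ) l (nhds (∫ x, w x * h x ∂μ)) := by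
  obtain ⟨x₀⟩ : Nonempty Ω := nonempty_of_isProbabilityMeasure μ
  obtain ⟨m₀⟩ : Nonempty ι := nonempty_of_neBot (l : Filter ι)
  have hΛ0 : 0 ≤ Λ := (h0 m₀ x₀).trans (hΛ m₀ x₀)
  have habs : ∀ m x, |f m x| ≤ Λ := fun m x => by rw [abs_of_nonneg (h0 m x)]; exact hΛ m x
  have hL2 : ∀ {h : Ω → ℝ} {C : ℝ}, Measurable h → (∀ x, |h x| ≤ C) → MemLp h 2 μ :=
    fun hm hC => MemLp.of_bound hm.aestronglyMeasurable _ (ae_of_all _ hC)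
  set F : ι → Lp ℝ 2 μ := fun m => (hL2 (hf m) (habs m)).toLp (f m) with hF
  have hFnorm : ∀ m, ‖F m‖ ≤ Λ := fun m => by
    have := Lp.norm_le_of_ae_bound (f := F m) (p := 2) hΛ0 (by
      filter_upwards [MemLp.coeFn_toLp (hL2 (hf m) (habs m))] with x hx
      rw [hx]
      exact habs m x)
    simpa [measureUnivNNReal] using this
  set D : ι → WeakDual ℝ (Lp ℝ 2 μ) := fun m =>
    StrongDual.toWeakDual (InnerProductSpace.toDual ℝ (Lp ℝ 2 μ) (F m)) with hD
  have hcomp := WeakDual.isCompact_closedBall (𝕜 := ℝ) (E := Lp ℝ 2 μ) 0 Λ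
  obtain ⟨D', -, hD'⟩ := isCompact_iff_ultrafilter_le_nhds.1 hcomp (l.map D) (by
    rw [Filter.le_principal_iff]
    refine Filter.mem_map.2 (Filter.univ_mem' fun m => ?_)
    simpa [hD] using hFnorm m)
  set w₀ : Lp ℝ 2 μ := (InnerProductSpace.toDual ℝ (Lp ℝ 2 μ)).symm (WeakDual.toStrongDual D')
  have hlim : ∀ h : Ω → ℝ, Measurable h → ∀ C, (∀ x, |h x| ≤ C) →
      Tendsto (fun m => ∫ x, f m x * h x ∂μ) l (nhds (∫ x, w₀ x * h x ∂μ)) := by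
    intro h hm C hC
    have hinner : ∀ u : Lp ℝ 2 μ, inner ℝ u ((hL2 hm hC).toLp h) = ∫ x, u x * h x ∂μ := by
      intro u
      rw [L2.inner_def]
      refine integral_congr_ae ?_
      filter_upwards [MemLp.coeFn_toLp (hL2 hm hC)] with x hx
      rw [hx]
      simp [mul_comm]
    have h1 : Tendsto (fun m => D m ((hL2 hm hC).toLp h)) l (nhds (D' ((hL2 hm hC).toLp h))) :=
      ((WeakDual.eval_continuous _).tendsto D').comp hD'
    have h2 : D' ((hL2 hm hC).toLp h) = ∫ x, w₀ x * h x ∂μ := by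
      rw [← hinner]
      simp [w₀]
    rw [h2] at h1
    refine h1.congr fun m => ?_
    simp only [hD]
    change InnerProductSpace.toDual ℝ (Lp ℝ 2 μ) (F m) _ = _
    rw [InnerProductSpace.toDual_apply_apply, hinner]
    refine integral_congr_ae ?_
    filter_upwards [MemLp.coeFn_toLp (hL2 (hf m) (habs m))] with x hx
    rw [hx]
  have hset : ∀ s, MeasurableSet s →
      Tendsto (fun m => ∫ x in s, f m x ∂μ) l (nhds (∫ x in s, w₀ x ∂μ)) := by
    intro s hs
    have h1 := hlim (s.indicator 1) (measurable_one.indicator hs) 1 fun x => by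
      by_cases hx : x ∈ s <;> simp [hx]
    have e : ∀ g : Ω → ℝ, ∫ x, g x * s.indicator 1 x ∂μ = ∫ x in s, g x ∂μ := fun g => by
      rw [← integral_indicator hs]
      congr with x
      by_cases hx : x ∈ s <;> simp [hx]
    simpa only [e] using h1
  have hfint : ∀ m, Integrable (f m) μ := fun m => integrable_of_abs_le (hf m) (habs m)
  have hwint : Integrable w₀ μ := (Lp.memLp w₀).integrable (by norm_num)
  have hw0 : 0 ≤ᵐ[μ] w₀ := ae_le_of_forall_setIntegral_le (integrable_zero _ _ _) hwint
    fun s hs _ => by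
      simp only [Pi.zero_apply, integral_zero]
      exact ge_of_tendsto' (hset s hs) fun m => integral_nonneg fun x => h0 m x
  have hwΛ : w₀ ≤ᵐ[μ] fun _ => Λ := ae_le_of_forall_setIntegral_le hwint (integrable_const _)
    fun s hs _ => le_of_tendsto' (hset s hs) fun m =>
      integral_mono (hfint m).integrableOn (integrable_const _) (hΛ m)
  refine ⟨fun x => max 0 (min Λ (w₀ x)), ?_, fun x => le_max_left _ _,
    fun x => max_le hΛ0 (min_le_left _ _), fun h hm C hC => ?_⟩
  · exact measurable_const.max (measurable_const.min (Lp.stronglyMeasurable w₀).measurable)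
  · convert hlim h hm C hC using 2
    refine integral_congr_ae ?_
    filter_upwards [hw0, hwΛ] with x h1 h2
    simp only [Pi.zero_apply] at h1
    simp only [min_eq_right h2, max_eq_right h1]

theorem tendsto_setIntegral_pi_prod [IsProbabilityMeasure μ] {ι κ : Type*} [Fintype κ]
    {l : Filter ι} {k : ι → κ → Ω → ℝ} {k' : κ → Ω → ℝ} {C : ℝ}
    (hk : ∀ m j, Measurable (k m j)) (hk' : ∀ j, Measurable (k' j))
    (hC : ∀ m j x, |k m j x| ≤ C) (hC' : ∀ j x, |k' j x| ≤ C)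
    (hlim : ∀ j s, MeasurableSet s →
      Tendsto (fun m => ∫ x in s, k m j x ∂μ) l (nhds (∫ x in s, k' j x ∂μ)))
    {G : Set (κ → Ω)} (hG : MeasurableSet G) :
    Tendsto (fun m => ∫ t in G, ∏ j, k m j (t j) ∂Measure.pi fun _ : κ => μ) l
      (nhds (∫ t in G, ∏ j, k' j (t j) ∂Measure.pi fun _ : κ => μ)) := by
  set ν := Measure.pi fun _ : κ => μ
  have hb : ∀ {g : κ → Ω → ℝ}, (∀ j x, |g j x| ≤ C) → ∀ t : κ → Ω,
      |∏ j, g j (t j)| ≤ C ^ Fintype.card κ := by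
    intro g hg t
    rw [Finset.abs_prod]
    calc ∏ j, |g j (t j)| ≤ ∏ _j : κ, C :=
          Finset.prod_le_prod (fun _ _ => abs_nonneg _) fun j _ => hg j _
      _ = _ := by simp
  have hint : ∀ {g : κ → Ω → ℝ}, (∀ j, Measurable (g j)) → (∀ j x, |g j x| ≤ C) →
      Integrable (fun t : κ → Ω => ∏ j, g j (t j)) ν := by
    intro g hg hgC
    refine integrable_of_abs_le ?_ (hb hgC)
    exact Finset.measurable_prod _ fun j _ => (hg j).comp (measurable_pi_apply j)
  have hbox : ∀ s : κ → Set Ω, (∀ j, MeasurableSet (s j)) → ∀ g : κ → Ω → ℝ,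
      ∫ t in univ.pi s, ∏ j, g j (t j) ∂ν = ∏ j, ∫ x in s j, g j x ∂μ := by
    intro s hs g
    rw [← integral_indicator (MeasurableSet.univ_pi hs)]
    simp_rw [← integral_indicator (hs _)]
    rw [← integral_fintype_prod_eq_prod (𝕜 := ℝ) (fun j => (s j).indicator (g j))]
    congr with t
    by_cases ht : t ∈ univ.pi s
    · rw [indicator_of_mem ht]
      exact Finset.prod_congr rfl fun j _ => by rw [indicator_of_mem (ht j (mem_univ j))]
    · rw [indicator_of_notMem ht]
      simp only [mem_univ_pi, not_forall] at ht
      obtain ⟨j, hj⟩ := ht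
      exact (Finset.prod_eq_zero (Finset.mem_univ j) (indicator_of_notMem hj _)).symm
  have hboxlim : ∀ s : κ → Set Ω, (∀ j, MeasurableSet (s j)) →
      Tendsto (fun m => ∫ t in univ.pi s, ∏ j, k m j (t j) ∂ν) l
        (nhds (∫ t in univ.pi s, ∏ j, k' j (t j) ∂ν)) := by
    intro s hs
    simp_rw [hbox s hs]
    exact tendsto_finsetProd _ fun j _ => hlim j _ (hs j)
  refine MeasurableSpace.induction_on_inter (C := fun G _ =>
    Tendsto (fun m => ∫ t in G, ∏ j, k m j (t j) ∂ν) l (nhds (∫ t in G, ∏ j, k' j (t j) ∂ν)))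
    generateFrom_pi.symm isPiSystem_pi ?_ ?_ ?_ ?_ G hG
  · simpa using tendsto_const_nhds
  · intro s hs
    obtain ⟨s, hs, rfl⟩ := hs
    exact hboxlim s fun j => hs j (mem_univ j)
  · intro s hs ih
    have huniv := hboxlim (fun _ => univ) fun _ => MeasurableSet.univ
    rw [pi_univ] at huniv
    simp_rw [setIntegral_univ] at huniv
    simp_rw [setIntegral_compl hs (hint hk' hC')]
    have : ∀ m, ∫ t in sᶜ, ∏ j, k m j (t j) ∂ν =
        ∫ t, ∏ j, k m j (t j) ∂ν - ∫ t in s, ∏ j, k m j (t j) ∂ν := fun m =>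
      setIntegral_compl hs (hint (hk m) (hC m))
    simp_rw [this]
    exact huniv.sub ih
  · intro s hd hs ih
    rw [integral_iUnion hs hd (hint hk' hC').integrableOn]
    have : ∀ m, ∫ t in ⋃ i, s i, ∏ j, k m j (t j) ∂ν = ∑' i, ∫ t in s i, ∏ j, k m j (t j) ∂ν :=
      fun m => integral_iUnion hs hd (hint (hk m) (hC m)).integrableOn
    simp_rw [this]
    refine tendsto_tsum_of_dominated_convergence
      (bound := fun i => C ^ Fintype.card κ * ν.real (s i)) ?_ ih (Eventually.of_forall fun m i => ?_)
    · refine Summable.mul_left _ ?_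
      refine ENNReal.summable_toReal ?_
      rw [← measure_iUnion hd hs]
      exact measure_ne_top _ _
    · exact norm_setIntegral_le_of_norm_le_const (measure_lt_top _ _) fun t _ => hb (hC m) t

theorem measure_pi_average_lt_le [IsProbabilityMeasure μ] {w : Ω → ℝ} {Λ L : ℝ} {p : ℕ}
    (hw : Measurable w) (hw0 : ∀ x, 0 ≤ w x) (hwΛ : ∀ x, w x ≤ Λ) (hL : 0 < L)
    (hwL : L / 2 ≤ ∫ x, w x ∂μ) (hp : 32 * Λ ^ 2 ≤ p * L ^ 2) (hp0 : 0 < p) :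
    Measure.pi (fun _ : Fin p => μ) {t | ∑ j, w (t j) < p * (L / 4)} ≤ ENNReal.ofReal (1 / 2) := by
  set ν := Measure.pi fun _ : Fin p => μ
  have hp1 : (0 : ℝ) < p := by exact_mod_cast hp0
  have hmem : MemLp w 2 μ := MemLp.of_bound hw.aestronglyMeasurable Λ (ae_of_all _ fun x => by
    rw [Real.norm_eq_abs, abs_of_nonneg (hw0 x)]; exact hwΛ x)
  have hmemj : ∀ j : Fin p, MemLp (fun t : Fin p → Ω => w (t j)) 2 ν := fun j =>
    hmem.comp_measurePreserving (measurePreserving_eval _ j)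
  set X : (Fin p → Ω) → ℝ := ∑ j, fun t => w (t j) with hX
  have hXm : MemLp X 2 ν := memLp_finsetSum' _ fun j _ => hmemj j
  have hXe : ∀ t, X t = ∑ j, w (t j) := fun t => by simp [hX]
  have hEX : ∫ t, X t ∂ν = p * ∫ x, w x ∂μ := by
    simp_rw [hXe]
    rw [integral_finsetSum _ fun j _ => (hmemj j).integrable (by norm_num)]
    have : ∀ j : Fin p, ∫ t, w (t j) ∂ν = ∫ x, w x ∂μ := fun j =>
      integral_comp_eval (μ := fun _ : Fin p => μ) hw.aestronglyMeasurable
    simp [this]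
  have hvar : ProbabilityTheory.variance X ν ≤ p * Λ ^ 2 := by
    rw [hX, ProbabilityTheory.variance_sum_pi fun _ => hmem]
    have : ProbabilityTheory.variance w μ ≤ Λ ^ 2 := by
      refine (ProbabilityTheory.variance_le_expectation_sq hw.aestronglyMeasurable).trans ?_
      calc _ ≤ ∫ _x, Λ ^ 2 ∂μ := integral_mono hmem.integrable_sq (integrable_const _) fun x =>
            pow_le_pow_left₀ (hw0 x) (hwΛ x) 2
        _ = _ := by simp
    simpa using mul_le_mul_of_nonneg_left this hp1.le
  have hcheb := ProbabilityTheory.meas_ge_le_variance_div_sq hXm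
    (show 0 < p * (L / 4) by positivity)
  refine le_trans (measure_mono fun t ht => ?_) (hcheb.trans (ENNReal.ofReal_le_ofReal ?_))
  · simp only [mem_ofPred_eq] at ht ⊢
    rw [hEX, hXe, abs_sub_comm]
    refine le_trans ?_ (le_abs_self _)
    nlinarith
  · rw [div_le_iff₀ (by positivity)]
    nlinarith

/-- If `g m` tends weakly to zero while its `L¹` norms stay at least `L`, then for most samples of
`p` independent points some average of `g m` over the sample exceeds `L / 8`. -/
theorem measure_pi_average_le_le [IsProbabilityMeasure μ] {l : Ultrafilter ℕ} {g : ℕ → Ω → ℝ}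
    {Λ L : ℝ} {p : ℕ} (hg : ∀ m, Measurable (g m)) (hgΛ : ∀ m x, |g m x| ≤ Λ) (hL : 0 < L)
    (hweak : ∀ s, MeasurableSet s → Tendsto (fun m => ∫ x in s, g m x ∂μ) l (nhds 0))
    (hgL : ∀ᶠ m in (l : Filter ℕ), L ≤ ∫ x, |g m x| ∂μ)
    (hp : 32 * Λ ^ 2 ≤ p * L ^ 2) (hp0 : 0 < p) :
    Measure.pi (fun _ : Fin p => μ) {t | ∀ m, ∑ j, g m (t j) ≤ p * (L / 8)} ≤
      ENNReal.ofReal (1 / 2) := by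
  have hp1 : (0 : ℝ) < p := by exact_mod_cast hp0
  have hΛ0 : 0 ≤ Λ := by
    obtain ⟨x⟩ : Nonempty Ω := nonempty_of_isProbabilityMeasure μ
    exact (abs_nonneg _).trans (hgΛ 0 x)
  have hgint : ∀ m, Integrable (g m) μ := fun m => integrable_of_abs_le (hg m) (hgΛ m)
  obtain ⟨w, hw, hw0, hwΛ, hwlim⟩ := exists_weak_limit (μ := μ) l (f := fun m x => max (g m x) 0)
    (Λ := Λ) (fun m => (hg m).max measurable_const) (fun m x => le_max_right _ _)
    fun m x => max_le ((le_abs_self _).trans (hgΛ m x)) hΛ0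
  have hwint : Integrable w μ := integrable_of_abs_le hw (C := Λ) fun x => by
    rw [abs_of_nonneg (hw0 x)]; exact hwΛ x
  have hgpint : ∀ m, Integrable (fun x => max (g m x) 0) μ := fun m => (hgint m).pos_part
  have hset : ∀ h : Ω → ℝ, Measurable h → ∀ C, (∀ x, |h x| ≤ C) → ∀ s, MeasurableSet s →
      Tendsto (fun m => ∫ x in s, max (g m x) 0 * h x ∂μ) l (nhds (∫ x in s, w x * h x ∂μ)) := by
    intro h hm C hC s hs
    have h1 := hwlim (s.indicator h) (hm.indicator hs) C fun x => by
      by_cases hx : x ∈ s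
      · simpa [hx] using hC x
      · simpa [hx] using (abs_nonneg _).trans (hC x)
    have e : ∀ u : Ω → ℝ, ∫ x, u x * s.indicator h x ∂μ = ∫ x in s, u x * h x ∂μ := fun u => by
      rw [← integral_indicator hs]
      congr with x
      by_cases hx : x ∈ s <;> simp [hx]
    simpa only [e] using h1
  have hset1 : ∀ s, MeasurableSet s →
      Tendsto (fun m => ∫ x in s, max (g m x) 0 ∂μ) l (nhds (∫ x in s, w x ∂μ)) := fun s hs => by
    simpa using hset (fun _ => 1) measurable_const 1 (by simp) s hs
  have hwL : L / 2 ≤ ∫ x, w x ∂μ := by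
    have h1 := hset1 univ MeasurableSet.univ
    have h2 := hweak univ MeasurableSet.univ
    simp only [setIntegral_univ] at h1 h2
    have h3 : Tendsto (fun m => ∫ x, |g m x| ∂μ) l (nhds (2 * (∫ x, w x ∂μ) - 0)) := by
      refine ((h1.const_mul 2).sub h2).congr fun m => ?_
      rw [← integral_const_mul, ← integral_sub ((hgpint m).const_mul 2) (hgint m)]
      congr with x
      rcases le_total (g m x) 0 with h | h
      · rw [max_eq_right h, abs_of_nonpos h]; ring
      · rw [max_eq_left h, abs_of_nonneg h]; ring
    have := ge_of_tendsto h3 hgL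
    linarith
  set ν := Measure.pi fun _ : Fin p => μ with hν
  set δ : ℝ := L / 16 with hδ
  have hδ0 : 0 < δ := by positivity
  set G : Set (Fin p → Ω) := {t | (∀ m, ∑ j, g m (t j) ≤ p * (L / 8)) ∧
    p * (L / 4) ≤ ∑ j, w (t j)} with hGdef
  have hGm : MeasurableSet G := by
    have h1 : ∀ m, Measurable fun t : Fin p → Ω => ∑ j, g m (t j) := fun m =>
      Finset.measurable_sum _ fun j _ => (hg m).comp (measurable_pi_apply j)
    have h2 : Measurable fun t : Fin p → Ω => ∑ j, w (t j) :=
      Finset.measurable_sum _ fun j _ => hw.comp (measurable_pi_apply j)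
    have h3 : G = (⋂ m, {t | ∑ j, g m (t j) ≤ p * (L / 8)}) ∩
        {t | p * (L / 4) ≤ ∑ j, w (t j)} := by ext t; simp [hGdef]
    rw [h3]
    exact (MeasurableSet.iInter fun m => measurableSet_le (h1 m) measurable_const).inter
      (measurableSet_le measurable_const h2)
  -- the weights and their weak limits
  set u : ℕ → Ω → ℝ := fun m x => max (g m x) 0 + δ with hu
  set v : ℕ → Ω → ℝ := fun m x => max (g m x) 0 * (2 * w x) - w x ^ 2 + δ * g m x with hv
  have hum : ∀ m, Measurable (u m) := fun m => ((hg m).max measurable_const).add_const δ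
  have hvm : ∀ m, Measurable (v m) := fun m =>
    ((((hg m).max measurable_const).mul (hw.const_mul 2)).sub (hw.pow_const 2)).add
      ((hg m).const_mul δ)
  have hulim : ∀ s, MeasurableSet s →
      Tendsto (fun m => ∫ x in s, u m x ∂μ) l (nhds (∫ x in s, (w x + δ) ∂μ)) := by
    intro s hs
    have e : ∀ f : Ω → ℝ, Integrable f μ →
        ∫ x in s, (f x + δ) ∂μ = ∫ x in s, f x ∂μ + ∫ x in s, δ ∂μ := fun f hf =>
      integral_add hf.integrableOn (integrable_const _)
    rw [e w hwint]
    refine ((hset1 s hs).add_const _).congr fun m => (e _ (hgpint m)).symm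
  have hw2 : ∀ x, |2 * w x| ≤ 2 * Λ := fun x => by
    rw [abs_of_nonneg (by have := hw0 x; positivity)]; linarith [hwΛ x]
  have hw2int : Integrable (fun x => w x ^ 2) μ :=
    integrable_of_abs_le (hw.pow_const 2) (C := Λ ^ 2) fun x => by
      rw [abs_of_nonneg (by positivity)]; exact pow_le_pow_left₀ (hw0 x) (hwΛ x) 2
  have hvlim : ∀ s, MeasurableSet s →
      Tendsto (fun m => ∫ x in s, v m x ∂μ) l (nhds (∫ x in s, w x ^ 2 ∂μ)) := by
    intro s hs
    have h1 := ((hset (fun x => 2 * w x) (hw.const_mul 2) _ hw2 s hs).sub_const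
      (∫ x in s, w x ^ 2 ∂μ)).add ((hweak s hs).const_mul δ)
    have e : ∫ x in s, w x * (2 * w x) ∂μ - ∫ x in s, w x ^ 2 ∂μ + δ * 0 =
        ∫ x in s, w x ^ 2 ∂μ := by
      have : ∀ x, w x * (2 * w x) = 2 * w x ^ 2 := fun x => by ring
      simp_rw [this]
      rw [integral_const_mul]
      ring
    rw [e] at h1
    refine h1.congr fun m => ?_
    have i1 : Integrable (fun x => max (g m x) 0 * (2 * w x)) μ :=
      (hgpint m).mul_bdd (c := 2 * Λ) (hw.const_mul 2).aestronglyMeasurable (ae_of_all _ hw2)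
    have i2 : Integrable (fun x => max (g m x) 0 * (2 * w x) - w x ^ 2) μ := i1.sub hw2int
    simp only [hv]
    rw [integral_add i2.integrableOn ((hgint m).const_mul δ).integrableOn,
      integral_sub i1.integrableOn hw2int.integrableOn, integral_const_mul]
  have hpos_le : ∀ m x, max (g m x) 0 ≤ Λ := fun m x =>
    max_le ((le_abs_self _).trans (hgΛ m x)) hΛ0
  set C : ℝ := (Λ + δ) + 3 * Λ ^ 2 + δ * Λ with hCdef
  have huC : ∀ m x, |u m x| ≤ C := fun m x => by
    have h1 := le_max_right (g m x) 0
    have h2 := hpos_le m x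
    rw [abs_of_nonneg (by positivity)]
    simp only [hu, hCdef]
    nlinarith
  have hvC : ∀ m x, |v m x| ≤ C := fun m x => by
    have h1 := le_max_right (g m x) 0
    have h2 := hpos_le m x
    have h3 := abs_le.1 (hgΛ m x)
    have h4 : max (g m x) 0 * (2 * w x) ≤ Λ * (2 * Λ) :=
      mul_le_mul h2 (by linarith [hwΛ x]) (by linarith [hw0 x]) hΛ0
    have h5 : w x ^ 2 ≤ Λ ^ 2 := pow_le_pow_left₀ (hw0 x) (hwΛ x) 2
    have h6 : 0 ≤ max (g m x) 0 * (2 * w x) := mul_nonneg h1 (by linarith [hw0 x])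
    have h7 := sq_nonneg (w x)
    rw [abs_le]
    simp only [hv, hCdef]
    constructor <;> nlinarith
  have hwC : ∀ x, |w x + δ| ≤ C := fun x => by
    rw [abs_of_nonneg (by linarith [hw0 x])]
    simp only [hCdef]
    nlinarith [hwΛ x]
  have hwwC : ∀ x, |w x ^ 2| ≤ C := fun x => by
    have h5 : w x ^ 2 ≤ Λ ^ 2 := pow_le_pow_left₀ (hw0 x) (hwΛ x) 2
    rw [abs_of_nonneg (by positivity)]
    simp only [hCdef]
    nlinarith
  have hvu : ∀ m x, v m x ≤ g m x * u m x := fun m x => by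
    simp only [hv, hu]
    rcases le_total (g m x) 0 with h | h
    · rw [max_eq_right h]; nlinarith [sq_nonneg (w x)]
    · rw [max_eq_left h]; nlinarith [sq_nonneg (g m x - w x)]
  have hu0 : ∀ m x, 0 ≤ u m x := fun m x => by
    have := le_max_right (g m x) 0
    simp only [hu]
    linarith
  have hprod : ∀ (a b : Ω → ℝ) (i : Fin p) (t : Fin p → Ω),
      ∏ j, (if j = i then a else b) (t j) = a (t i) * ∏ j ∈ Finset.univ.erase i, b (t j) := by
    intro a b i t
    rw [← Finset.mul_prod_erase _ _ (Finset.mem_univ i), if_pos rfl]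
    congr 1
    exact Finset.prod_congr rfl fun j hj => by rw [if_neg (Finset.ne_of_mem_erase hj)]
  have hprod' : ∀ (b : Ω → ℝ) (i : Fin p) (t : Fin p → Ω),
      ∏ j, b (t j) = b (t i) * ∏ j ∈ Finset.univ.erase i, b (t j) := fun b i t =>
    (Finset.mul_prod_erase _ _ (Finset.mem_univ i)).symm
  have hpint : ∀ k : Fin p → Ω → ℝ, (∀ j, Measurable (k j)) → (∀ j x, |k j x| ≤ C) →
      IntegrableOn (fun t : Fin p → Ω => ∏ j, k j (t j)) G ν := fun k hk hkC =>
    (integrable_of_abs_le (C := ∏ _j : Fin p, C)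
      (Finset.measurable_prod _ fun j _ => (hk j).comp (measurable_pi_apply j)) fun t => by
        rw [Finset.abs_prod]
        exact Finset.prod_le_prod (fun _ _ => abs_nonneg _) fun j _ => hkC j _).integrableOn
  have hiteM : ∀ {a b : Ω → ℝ} (i : Fin p), Measurable a → Measurable b →
      ∀ j, Measurable (if j = i then a else b) := fun i ha hb j => by
    split_ifs <;> assumption
  have hiteC : ∀ {a b : Ω → ℝ} (i : Fin p), (∀ x, |a x| ≤ C) → (∀ x, |b x| ≤ C) →
      ∀ j x, |(if j = i then a else b) x| ≤ C := fun i ha hb j x => by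
    split_ifs
    · exact ha x
    · exact hb x
  have hwδm : Measurable fun x => w x + δ := hw.add_const δ
  have hwwm : Measurable fun x => w x ^ 2 := hw.pow_const 2
  have hineq : ∀ m, ∑ i, ∫ t in G, ∏ j, (if j = i then v m else u m) (t j) ∂ν ≤
      p * (L / 8) * ∫ t in G, ∏ j, u m (t j) ∂ν := by
    intro m
    rw [← integral_finsetSum _ fun i _ => hpint _ (hiteM i (hvm m) (hum m))
      (hiteC i (hvC m) (huC m)), ← integral_const_mul]
    refine setIntegral_mono_on (integrable_finsetSum _ fun i _ => hpint _
      (hiteM i (hvm m) (hum m)) (hiteC i (hvC m) (huC m)))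
      ((hpint _ (fun _ => hum m) fun _ => huC m).const_mul _) hGm fun t ht => ?_
    have hP0 : 0 ≤ ∏ j, u m (t j) := Finset.prod_nonneg fun j _ => hu0 m _
    calc ∑ i, ∏ j, (if j = i then v m else u m) (t j)
        ≤ ∑ i, g m (t i) * ∏ j, u m (t j) := by
          refine Finset.sum_le_sum fun i _ => ?_
          rw [hprod, hprod' (u m) i, ← mul_assoc]
          exact mul_le_mul_of_nonneg_right (hvu m _) (Finset.prod_nonneg fun j _ => hu0 m _)
      _ = (∑ i, g m (t i)) * ∏ j, u m (t j) := by rw [Finset.sum_mul]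
      _ ≤ _ := mul_le_mul_of_nonneg_right (ht.1 m) hP0
  have hlimineq : ∑ i, ∫ t in G, ∏ j, (if j = i then fun x => w x ^ 2 else fun x => w x + δ) (t j) ∂ν
      ≤ p * (L / 8) * ∫ t in G, ∏ j, (w (t j) + δ) ∂ν := by
    refine le_of_tendsto_of_tendsto' (tendsto_finsetSum _ fun i _ =>
      tendsto_setIntegral_pi_prod (l := (l : Filter ℕ))
        (fun m => hiteM i (hvm m) (hum m)) (hiteM i hwwm hwδm)
        (fun m => hiteC i (hvC m) (huC m)) (hiteC i hwwC hwC) (fun j s hs => ?_) hGm)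
      ((tendsto_setIntegral_pi_prod (l := (l : Filter ℕ)) (fun m _ => hum m) (fun _ => hwδm)
        (fun m _ => huC m) (fun _ => hwC) (fun _ s hs => hulim s hs) hGm).const_mul _) hineq
    split_ifs
    · exact hvlim s hs
    · exact hulim s hs
  have hGnull : ν G = 0 := by
    set I := ∫ t in G, ∏ j, (w (t j) + δ) ∂ν with hI
    have hlower : p * (L / 4 - δ) * I ≤
        ∑ i, ∫ t in G, ∏ j, (if j = i then fun x => w x ^ 2 else fun x => w x + δ) (t j) ∂ν := by
      rw [← integral_finsetSum _ fun i _ => hpint _ (hiteM i hwwm hwδm) (hiteC i hwwC hwC), hI,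
        ← integral_const_mul]
      refine setIntegral_mono_on ((hpint (fun _ x => w x + δ) (fun _ => hwδm) fun _ =>
        hwC).const_mul _) (integrable_finsetSum _ fun i _ => hpint _
        (hiteM i hwwm hwδm) (hiteC i hwwC hwC)) hGm fun t ht => ?_
      have hP0 : ∀ s : Finset (Fin p), 0 ≤ ∏ j ∈ s, (w (t j) + δ) := fun s =>
        Finset.prod_nonneg fun j _ => by linarith [hw0 (t j)]
      calc p * (L / 4 - δ) * ∏ j, (w (t j) + δ)
          ≤ (∑ i, (w (t i) - δ)) * ∏ j, (w (t j) + δ) := by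
            refine mul_le_mul_of_nonneg_right ?_ (hP0 _)
            rw [Finset.sum_sub_distrib]
            simp only [Finset.sum_const, Finset.card_univ, Fintype.card_fin, nsmul_eq_mul]
            linarith [ht.2]
        _ = ∑ i, (w (t i) - δ) * ∏ j, (w (t j) + δ) := by rw [Finset.sum_mul]
        _ ≤ _ := by
            refine Finset.sum_le_sum fun i _ => ?_
            rw [hprod, hprod' (fun x => w x + δ) i, ← mul_assoc]
            refine mul_le_mul_of_nonneg_right ?_ (hP0 _)
            nlinarith [sq_nonneg δ]
    have hI0 : δ ^ p * ν.real G ≤ I := by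
      have : ∫ _t in G, δ ^ p ∂ν ≤ I := setIntegral_mono_on (integrable_const _)
        (hpint (fun _ x => w x + δ) (fun _ => hwδm) fun _ => hwC) hGm fun t _ => by
          calc δ ^ p = ∏ _j : Fin p, δ := by simp
            _ ≤ _ := Finset.prod_le_prod (fun _ _ => hδ0.le) fun j _ => by linarith [hw0 (t j)]
      rw [setIntegral_const, smul_eq_mul] at this
      linarith
    have hI1 : I ≤ 0 := by
      by_contra! hI1
      have h1 : p * (L / 8) * I < p * (L / 4 - δ) * I := by
        gcongr
        linarith
      linarith
    have h0 : ν.real G = 0 := by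
      have h1 : 0 ≤ ν.real G := measureReal_nonneg
      have h2 : 0 < δ ^ p := by positivity
      nlinarith
    exact (measureReal_eq_zero_iff (measure_ne_top _ _)).1 h0
  calc ν {t | ∀ m, ∑ j, g m (t j) ≤ p * (L / 8)}
      ≤ ν (G ∪ {t | ∑ j, w (t j) < p * (L / 4)}) := measure_mono fun t ht => by
        rcases lt_or_ge (∑ j, w (t j)) (p * (L / 4)) with h | h
        · exact Or.inr h
        · exact Or.inl ⟨ht, h⟩
    _ ≤ ν G + ν {t | ∑ j, w (t j) < p * (L / 4)} := measure_union_le _ _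
    _ ≤ _ := by
        rw [hGnull, zero_add]
        exact measure_pi_average_lt_le hw hw0 hwΛ hL hwL hp hp0

/-- The Dirichlet kernel of order `m` of the system `e`. -/
noncomputable def dirichletKernel (e : ℕ → Ω → ℝ) (m : ℕ) (x t : Ω) : ℝ :=
  ∑ n ∈ Finset.range m, e n x * e n t

theorem dirichletKernel_add_sub {α : Type*} (e : ℕ → α → ℝ) (m r : ℕ) (x t : α) :
    dirichletKernel e (m + r) x t - dirichletKernel e m x t =
      ∑ n ∈ Finset.range r, e (m + n) x * e (m + n) t := by
  simp only [dirichletKernel]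
  rw [Finset.sum_range_add]
  ring

namespace BoundedONS
variable {M : ℝ} {e : ℕ → Ω → ℝ}

theorem sum_sq_setIntegral_le [IsProbabilityMeasure μ] (he : BoundedONS μ M e) (s : Set Ω)
    (N : ℕ) :
    ∑ n ∈ Finset.range N, (∫ x in s, e n x ∂μ) ^ 2 ≤ 1 := by
  set c : ℕ → ℝ := fun n => ∫ x in s, e n x ∂μ with hc
  set T : Ω → ℝ := fun x => ∑ n ∈ Finset.range N, c n * e n x with hT
  have hTm : Measurable T := Finset.measurable_sum _ fun n _ => (he.measurable n).const_mul _
  have heint : ∀ n, Integrable (e n) μ := fun n =>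
    integrable_of_abs_le (he.measurable n) (he.abs_le n)
  have hTC : ∀ x, |T x| ≤ ∑ n ∈ Finset.range N, |c n| * M := fun x =>
    (Finset.abs_sum_le_sum_abs _ _).trans (Finset.sum_le_sum fun n _ => by
      rw [abs_mul]; exact mul_le_mul_of_nonneg_left (he.abs_le n x) (abs_nonneg _))
  have hTint : Integrable T μ := integrable_of_abs_le hTm hTC
  have hT2int : Integrable (fun x => T x ^ 2) μ :=
    integrable_of_abs_le (hTm.pow_const 2) (C := (∑ n ∈ Finset.range N, |c n| * M) ^ 2)
      fun x => by
        rw [abs_pow]; exact pow_le_pow_left₀ (abs_nonneg _) (hTC x) 2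
  have h1 : ∫ x, T x ^ 2 ∂μ = ∑ n ∈ Finset.range N, c n ^ 2 := he.integral_sq_sum c _
  have h2 : ∫ x in s, T x ∂μ = ∑ n ∈ Finset.range N, c n ^ 2 := by
    simp only [hT]
    rw [integral_finsetSum _ fun n _ => ((heint n).const_mul _).integrableOn]
    exact Finset.sum_congr rfl fun n _ => by rw [integral_const_mul, sq]
  have h3 : ∫ x in s, (2 * T x) ∂μ ≤ ∫ x in s, (T x ^ 2 + 1) ∂μ :=
    integral_mono (hTint.const_mul 2).integrableOn
      (hT2int.add (integrable_const 1)).integrableOn fun x => by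
        show 2 * T x ≤ T x ^ 2 + 1
        nlinarith [sq_nonneg (T x - 1)]
  rw [integral_const_mul, h2, integral_add hT2int.integrableOn (integrable_const 1)] at h3
  have h4 : ∫ x in s, T x ^ 2 ∂μ ≤ ∫ x, T x ^ 2 ∂μ :=
    setIntegral_le_integral hT2int (ae_of_all _ fun x => sq_nonneg _)
  have h5 : ∫ _ in s, (1 : ℝ) ∂μ ≤ 1 := by
    simp only [integral_const, measureReal_restrict_apply_univ, smul_eq_mul, mul_one]
    exact measureReal_le_one
  linarith

theorem tendsto_setIntegral [IsProbabilityMeasure μ] (he : BoundedONS μ M e) (s : Set Ω) :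
    Tendsto (fun n => ∫ x in s, e n x ∂μ) atTop (nhds 0) := by
  have h := (summable_of_sum_range_le (fun n => sq_nonneg _)
    (he.sum_sq_setIntegral_le s)).tendsto_atTop_zero
  have h' := h.sqrt
  simp only [Real.sqrt_sq_eq_abs, Real.sqrt_zero] at h'
  exact (tendsto_zero_iff_abs_tendsto_zero _).2 h'

theorem measure_sum_sq_ge [IsProbabilityMeasure μ] (he : BoundedONS μ M e) {R : ℕ}
    (hR : 0 < R) : ENNReal.ofReal (1 / (2 * M ^ 2)) ≤
      μ {x | (R : ℝ) / 2 ≤ ∑ n ∈ Finset.range R, e n x ^ 2} := by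
  have hM := he.one_le_bound
  set f : Ω → ℝ := fun x => ∑ n ∈ Finset.range R, e n x ^ 2 with hf
  have hfm : Measurable f := Finset.measurable_sum _ fun n _ => (he.measurable n).pow_const 2
  have hfM : ∀ x, f x ≤ R * M ^ 2 := fun x => by
    calc f x ≤ ∑ n ∈ Finset.range R, M ^ 2 := Finset.sum_le_sum fun n _ => by
          rw [← sq_abs]; exact pow_le_pow_left₀ (abs_nonneg _) (he.abs_le n x) 2
      _ = R * M ^ 2 := by simp
  have hf0 : ∀ x, 0 ≤ f x := fun x => Finset.sum_nonneg fun n _ => sq_nonneg _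
  have hfint : Integrable f μ := integrable_of_abs_le hfm fun x => by
    rw [abs_of_nonneg (hf0 x)]; exact hfM x
  have hfI : ∫ x, f x ∂μ = R := by
    simp only [hf]
    have i : ∀ n ∈ Finset.range R, Integrable (fun x => e n x ^ 2) μ := fun n _ =>
      integrable_of_abs_le ((he.measurable n).pow_const 2) (C := M ^ 2) fun x => by
        rw [abs_pow]; exact pow_le_pow_left₀ (abs_nonneg _) (he.abs_le n x) 2
    rw [integral_finsetSum _ i]
    simp [sq, he.integral_mul]
  set A := {x | (R : ℝ) / 2 ≤ f x} with hA
  have hAm : MeasurableSet A := measurableSet_le measurable_const hfm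
  have hle : ∀ x, f x ≤ R / 2 + A.indicator (fun _ => (R : ℝ) * M ^ 2) x := fun x => by
    by_cases hx : x ∈ A
    · rw [indicator_of_mem hx]; have := hfM x; have : (0 : ℝ) ≤ R := by positivity
      linarith
    · rw [indicator_of_notMem hx]
      have : f x < R / 2 := by simpa [hA] using hx
      linarith
  have hind : Integrable (A.indicator (fun _ => (R : ℝ) * M ^ 2)) μ :=
    (integrable_const _).indicator hAm
  have h1 := integral_mono hfint ((integrable_const ((R : ℝ) / 2)).add hind) hle
  have h2 : ∫ x, ((R : ℝ) / 2 + A.indicator (fun _ => (R : ℝ) * M ^ 2) x) ∂μ =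
      R / 2 + μ.real A * (R * M ^ 2) := by
    rw [integral_add (integrable_const _) hind, integral_indicator hAm]
    simp
  rw [hfI] at h1
  have h3 : (R : ℝ) ≤ R / 2 + μ.real A * (R * M ^ 2) := h1.trans_eq h2
  have hR' : (0 : ℝ) < R := by exact_mod_cast hR
  have h4 : 1 / (2 * M ^ 2) ≤ μ.real A := by
    rw [div_le_iff₀ (by positivity)]
    by_contra hcon
    push Not at hcon
    nlinarith
  calc ENNReal.ofReal (1 / (2 * M ^ 2)) ≤ ENNReal.ofReal (μ.real A) :=
        ENNReal.ofReal_le_ofReal h4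
    _ = μ A := ofReal_measureReal

theorem measure_frequently_sum_sq_ge [IsProbabilityMeasure μ] (he : BoundedONS μ M e) {R : ℕ}
    (hR : 0 < R) : ∃ X : Set Ω, MeasurableSet X ∧ ENNReal.ofReal (1 / (2 * M ^ 2)) ≤ μ X ∧
      ∀ x ∈ X, ∃ᶠ m in atTop, (R : ℝ) / 2 ≤ ∑ n ∈ Finset.range R, e (m + n) x ^ 2 := by
  set A : ℕ → Set Ω := fun m => {x | (R : ℝ) / 2 ≤ ∑ n ∈ Finset.range R, e (m + n) x ^ 2}
    with hA
  have hAm : ∀ m, MeasurableSet (A m) := fun m => measurableSet_le measurable_const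
    (Finset.measurable_sum _ fun n _ => (he.measurable (m + n)).pow_const 2)
  have hAμ : ∀ m, ENNReal.ofReal (1 / (2 * M ^ 2)) ≤ μ (A m) := fun m =>
    (he.shift m).measure_sum_sq_ge hR
  have hU : ∀ k, MeasurableSet (⋃ m ≥ k, A m) := fun k =>
    MeasurableSet.iUnion fun m => MeasurableSet.iUnion fun _ => hAm m
  refine ⟨⋂ k, ⋃ m ≥ k, A m, MeasurableSet.iInter hU, ?_, fun x hx => ?_⟩
  · have hanti : Antitone fun k => ⋃ m ≥ k, A m := fun k k' hk =>
      biUnion_subset_biUnion_left fun m (hm : m ≥ k') => hk.trans hm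
    rw [hanti.measure_iInter (fun k => (hU k).nullMeasurableSet) ⟨0, measure_ne_top _ _⟩]
    exact le_iInf fun k => (hAμ k).trans (measure_mono (subset_biUnion_of_mem (mem_Ici.2 le_rfl)))
  · rw [frequently_atTop]
    intro k
    obtain ⟨m, hm, hxm⟩ := mem_iUnion₂.1 (mem_iInter.1 hx k)
    exact ⟨m, hm, hxm⟩

theorem measure_pi_kernel_le [IsProbabilityMeasure μ] (he : BoundedONS μ M e) {C : ℝ}
    (hC : 1 ≤ C) {K p : ℕ}
    (hK : 2 * (16 * C) * (64 * M ^ 6 * (64 * (16 * C) ^ 2)) < K + 1) (hp0 : 0 < p)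
    (hp : 32 * (2 ^ K * M ^ 2) ^ 2 ≤ p * (16 * C) ^ 2) {x : Ω}
    (hx : ∃ᶠ m in atTop, (2 : ℝ) ^ K / 2 ≤ ∑ n ∈ Finset.range (2 ^ K), e (m + n) x ^ 2) :
    Measure.pi (fun _ : Fin p => μ)
      {t | ∀ m, |∑ j, dirichletKernel e m x (t j)| ≤ p * C} ≤ ENNReal.ofReal (1 / 2) := by
  have hM := he.one_le_bound
  set B : ℕ → ℕ → Ω → ℝ := fun r m t => ∑ n ∈ Finset.range r, e (m + n) x * e (m + n) t with hB
  have h1 : ∃ᶠ m in atTop, ∃ r ∈ Finset.range (2 ^ K + 1), 16 * C < ∫ t, |B r m t| ∂μ := by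
    refine hx.mono fun m hm => ?_
    obtain ⟨r, hr, h⟩ := (he.shift m).exists_lt_integral_abs_sum (L := 16 * C) (by linarith) hK
      (d := fun n => e (m + n) x) (fun n => he.abs_le _ _) hm
    exact ⟨r, by simpa [Nat.lt_succ_iff] using hr, h⟩
  obtain ⟨r, hr, h2⟩ : ∃ r ∈ Finset.range (2 ^ K + 1),
      ∃ᶠ m in atTop, 16 * C < ∫ t, |B r m t| ∂μ := by
    by_contra hcon
    push Not at hcon
    refine h1 (((Finset.eventually_all _).2 hcon).mono fun m hm => ?_)
    push Not
    exact fun r hr => hm r hr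
  have hr' : r ≤ 2 ^ K := Nat.lt_succ_iff.1 (Finset.mem_range.1 hr)
  have : (atTop ⊓ 𝓟 {m | 16 * C < ∫ t, |B r m t| ∂μ}).NeBot := frequently_mem_iff_neBot.1 h2
  set l : Ultrafilter ℕ := Ultrafilter.of (atTop ⊓ 𝓟 {m | 16 * C < ∫ t, |B r m t| ∂μ}) with hl
  have hl1 : (l : Filter ℕ) ≤ atTop := (Ultrafilter.of_le _).trans inf_le_left
  have hl2 : ∀ᶠ m in (l : Filter ℕ), 16 * C < ∫ t, |B r m t| ∂μ :=
    le_principal_iff.1 ((Ultrafilter.of_le _).trans inf_le_right)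
  have hBm : ∀ m, Measurable (B r m) := fun m =>
    Finset.measurable_sum _ fun n _ => (he.measurable _).const_mul _
  have hBΛ : ∀ m t, |B r m t| ≤ 2 ^ K * M ^ 2 := fun m t => by
    calc |B r m t| ≤ ∑ n ∈ Finset.range r, M ^ 2 :=
          (Finset.abs_sum_le_sum_abs _ _).trans (Finset.sum_le_sum fun n _ => by
            rw [abs_mul, sq]
            exact mul_le_mul (he.abs_le _ _) (he.abs_le _ _) (abs_nonneg _) (by linarith))
      _ = r * M ^ 2 := by simp
      _ ≤ 2 ^ K * M ^ 2 := mul_le_mul_of_nonneg_right (by exact_mod_cast hr') (by positivity)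
  have hweak : ∀ s, MeasurableSet s → Tendsto (fun m => ∫ t in s, B r m t ∂μ) l (nhds 0) := by
    intro s _
    have e1 : ∀ m, ∫ t in s, B r m t ∂μ =
        ∑ n ∈ Finset.range r, e (m + n) x * ∫ t in s, e (m + n) t ∂μ := fun m => by
      simp only [hB]
      rw [integral_finsetSum _ fun n _ => ((integrable_of_abs_le (he.measurable (m + n))
        (he.abs_le (m + n))).const_mul _).integrableOn]
      simp only [integral_const_mul]
    simp only [e1]
    refine Tendsto.mono_left ?_ hl1
    rw [← Finset.sum_const_zero (s := Finset.range r)]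
    refine tendsto_finsetSum _ fun n _ => ?_
    have h3 : Tendsto (fun m => ∫ t in s, e (m + n) t ∂μ) atTop (nhds 0) :=
      (he.tendsto_setIntegral s).comp (tendsto_add_atTop_nat n)
    refine squeeze_zero_norm (a := fun m => M * |∫ t in s, e (m + n) t ∂μ|) (fun m => ?_) ?_
    · rw [norm_mul]
      exact mul_le_mul_of_nonneg_right (he.abs_le _ _) (norm_nonneg _)
    · simpa using h3.abs.const_mul M
  refine (measure_mono fun t ht => ?_).trans
    (measure_pi_average_le_le (l := l) hBm hBΛ (L := 16 * C) (by linarith) hweak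
      (hl2.mono fun m hm => hm.le) hp hp0)
  intro m
  have ht1 := _root_.abs_le.1 (ht m)
  have ht2 := _root_.abs_le.1 (ht (m + r))
  have e2 : ∑ j, B r m (t j) =
      ∑ j, dirichletKernel e (m + r) x (t j) - ∑ j, dirichletKernel e m x (t j) := by
    rw [← Finset.sum_sub_distrib]
    exact Finset.sum_congr rfl fun j _ => (dirichletKernel_add_sub e m r x (t j)).symm
  rw [e2]
  linarith

/-- For averages of `p` random point masses, `p` large, the partial sums are large with
probability at least `1 / 2` at every point of a set of measure at least `1 / (2 M ^ 2)`. -/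
theorem exists_measure_pi_kernel_le [IsProbabilityMeasure μ] (he : BoundedONS μ M e) {C : ℝ}
    (hC : 1 ≤ C) : ∃ p : ℕ, 0 < p ∧ ∃ X : Set Ω, MeasurableSet X ∧
      ENNReal.ofReal (1 / (2 * M ^ 2)) ≤ μ X ∧ ∀ x ∈ X, Measure.pi (fun _ : Fin p => μ)
        {t | ∀ m, |∑ j, dirichletKernel e m x (t j)| ≤ p * C} ≤ ENNReal.ofReal (1 / 2) := by
  obtain ⟨K, hK⟩ := exists_nat_gt (2 * (16 * C) * (64 * M ^ 6 * (64 * (16 * C) ^ 2)))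
  obtain ⟨p, hp⟩ := exists_nat_ge (32 * (2 ^ K * M ^ 2) ^ 2)
  obtain ⟨X, hX, hXμ, hXx⟩ := he.measure_frequently_sum_sq_ge (R := 2 ^ K) (by positivity)
  have hM := he.one_le_bound
  have hp0 : 0 < p := by
    have : (0 : ℝ) < p := lt_of_lt_of_le (by positivity) hp
    exact_mod_cast this
  refine ⟨p, hp0, X, hX, hXμ, fun x hx => he.measure_pi_kernel_le hC (hK.trans (lt_add_one _))
    hp0 (hp.trans ?_) (by simpa using hXx x hx)⟩
  refine le_mul_of_one_le_right (by positivity) ?_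
  nlinarith

end BoundedONS

/-- The Banach principle: pointwise a.e. boundedness of a sequence of continuous linear operators
into measurable functions implies a uniform weak-type bound. -/
theorem exists_measure_exists_lt_abs_le [IsFiniteMeasure μ] {E : Type*} [NormedAddCommGroup E]
    [NormedSpace ℝ E] [CompleteSpace E] {T : ℕ → Ω → E →L[ℝ] ℝ}
    (hT : ∀ m f, Measurable fun x => T m x f)
    (hbdd : ∀ f, ∀ᵐ x ∂μ, ∃ B, ∀ m, |T m x f| ≤ B) {ε : ENNReal} (hε : ε ≠ 0) :
    ∃ C : ℝ, 0 < C ∧ ∀ f, ‖f‖ ≤ 1 → μ {x | ∃ m, C < |T m x f|} ≤ ε := by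
  set U : ℝ → E → Set Ω := fun C f => {x | ∃ m, C < |T m x f|} with hU
  have hUm : ∀ C f, MeasurableSet (U C f) := fun C f => by
    have : U C f = ⋃ m, {x | C < |T m x f|} := by ext x; simp [hU]
    rw [this]
    exact MeasurableSet.iUnion fun m => measurableSet_lt measurable_const (hT m f).abs
  set A : ℕ → Set E := fun k => {f | μ (U (k + 1) f) ≤ ε / 2} with hA
  have hε2 : ε / 2 ≠ 0 := (ENNReal.half_pos hε).ne'
  have hAclosed : ∀ k, IsClosed (A k) := by
    refine fun k => IsSeqClosed.isClosed fun f g hf hfg => ?_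
    set V : ℕ → Set Ω := fun i => ⋂ j, ⋂ (_ : i ≤ j), U (k + 1) (f j) with hV
    have hVmono : Monotone V := fun i i' hi x hx =>
      mem_iInter₂.2 fun j hj => mem_iInter₂.1 hx j (hi.trans hj)
    have hsub : U (k + 1) g ⊆ ⋃ i, V i := by
      rintro x ⟨m, hm⟩
      have h1 : Tendsto (fun j => |T m x (f j)|) atTop (nhds |T m x g|) :=
        (((T m x).continuous.tendsto g).comp hfg).abs
      obtain ⟨i, hi⟩ := eventually_atTop.1 (h1.eventually_const_lt hm)
      exact mem_iUnion.2 ⟨i, mem_iInter₂.2 fun j hj => ⟨m, hi j hj⟩⟩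
    refine (measure_mono hsub).trans ?_
    rw [hVmono.measure_iUnion]
    exact iSup_le fun i => (measure_mono (iInter₂_subset i le_rfl)).trans (hf i)
  have hAunion : ⋃ k, A k = univ := by
    refine eq_univ_of_forall fun f => ?_
    have hanti : Antitone fun k : ℕ => U (k + 1) f := fun k k' hk x ⟨m, hm⟩ =>
      ⟨m, lt_of_le_of_lt (by simpa using hk) hm⟩
    have hnull : μ (⋂ k : ℕ, U (k + 1) f) = 0 := by
      refine measure_mono_null (fun x hx => ?_) (ae_iff.1 (hbdd f))
      rintro ⟨B, hB⟩
      obtain ⟨k, hk⟩ := exists_nat_ge B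
      obtain ⟨m, hm⟩ := mem_iInter.1 hx k
      linarith [hB m]
    have hlim := tendsto_measure_iInter_atTop (μ := μ)
      (fun k : ℕ => (hUm (k + 1) f).nullMeasurableSet) hanti ⟨0, measure_ne_top _ _⟩
    rw [hnull] at hlim
    obtain ⟨k, hk⟩ := (hlim.eventually_le_const (pos_iff_ne_zero.2 hε2)).exists
    exact mem_iUnion.2 ⟨k, hk⟩
  obtain ⟨k, f₀, hf₀⟩ := nonempty_interior_of_iUnion_of_closed hAclosed hAunion
  obtain ⟨δ, hδ, hball⟩ := Metric.isOpen_iff.1 isOpen_interior f₀ hf₀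
  have hball' : ∀ g : E, ‖g‖ < δ → μ (U (k + 1) (f₀ + g)) ≤ ε / 2 := fun g hg =>
    (interior_subset (hball (by simpa [dist_eq_norm] using hg)) : f₀ + g ∈ A k)
  refine ⟨2 * (k + 1) / (δ / 2), by positivity, fun f hf => ?_⟩
  have hsub : U (2 * (k + 1) / (δ / 2)) f ⊆
      U (k + 1) (f₀ + (δ / 2) • f) ∪ U (k + 1) (f₀ + 0) := by
    rintro x ⟨m, hm⟩
    rw [div_lt_iff₀ (by positivity)] at hm
    by_contra hcon
    simp only [hU, mem_union, mem_ofPred_eq, not_or, not_exists, not_lt] at hcon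
    have h1 := hcon.1 m
    have h2 := hcon.2 m
    simp only [map_add, map_smul, smul_eq_mul, add_zero] at h1 h2
    have h3 : |T m x f| * (δ / 2) = |(T m x f₀ + δ / 2 * T m x f) - T m x f₀| := by
      rw [add_sub_cancel_left, abs_mul, abs_of_pos (by positivity : 0 < δ / 2), mul_comm]
    have h4 := abs_sub (T m x f₀ + δ / 2 * T m x f) (T m x f₀)
    linarith
  calc μ (U (2 * (k + 1) / (δ / 2)) f)
      ≤ μ (U (k + 1) (f₀ + (δ / 2) • f)) + μ (U (k + 1) (f₀ + 0)) :=
        (measure_mono hsub).trans (measure_union_le _ _)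
    _ ≤ ε / 2 + ε / 2 := add_le_add (hball' _ (by
        rw [norm_smul, Real.norm_of_nonneg (by positivity)]; nlinarith)) (hball' 0 (by simpa))
    _ = ε := ENNReal.add_halves ε

/-- The partial sum of order `m` of the Fourier series of `f` with respect to `e`. -/
noncomputable def fourierSum (μ : Measure Ω) (e : ℕ → Ω → ℝ) (f : Ω → ℝ) (m : ℕ) (x : Ω) : ℝ :=
  ∑ n ∈ Finset.range m, (∫ t, f t * e n t ∂μ) * e n x

theorem fourierSum_congr_ae {e : ℕ → Ω → ℝ} {f g : Ω → ℝ} (h : f =ᵐ[μ] g) :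
    fourierSum μ e f = fourierSum μ e g := by
  ext m x
  refine Finset.sum_congr rfl fun n _ => ?_
  have : ∫ t, f t * e n t ∂μ = ∫ t, g t * e n t ∂μ :=
    integral_congr_ae (h.mul (ae_eq_refl (e n)))
  rw [this]

theorem exists_clm_integral_mul {h : Ω → ℝ} {M : ℝ} (hh : Measurable h) (hM : ∀ x, |h x| ≤ M) :
    ∃ c : Lp ℝ 1 μ →L[ℝ] ℝ, ∀ f, c f = ∫ t, f t * h t ∂μ := by
  have hint : ∀ f : Lp ℝ 1 μ, Integrable (fun t => f t * h t) μ := fun f =>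
    (L1.integrable_coeFn f).mul_bdd (c := M) hh.aestronglyMeasurable (ae_of_all _ hM)
  refine ⟨LinearMap.mkContinuous
    { toFun := fun f => ∫ t, f t * h t ∂μ
      map_add' := fun f g => ?_
      map_smul' := fun a f => ?_ } M fun f => ?_, fun f => rfl⟩
  · rw [← integral_add (hint f) (hint g)]
    refine integral_congr_ae ?_
    filter_upwards [Lp.coeFn_add f g] with t ht
    rw [ht, Pi.add_apply, add_mul]
  · rw [RingHom.id_apply, smul_eq_mul, ← integral_const_mul]
    refine integral_congr_ae ?_
    filter_upwards [Lp.coeFn_smul a f] with t ht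
    rw [ht, Pi.smul_apply, smul_eq_mul, mul_assoc]
  · show ‖∫ t, f t * h t ∂μ‖ ≤ M * ‖f‖
    rw [L1.norm_eq_integral_norm, ← integral_const_mul]
    refine norm_integral_le_of_norm_le ((L1.integrable_coeFn f).norm.const_mul M)
      (ae_of_all _ fun t => ?_)
    rw [norm_mul, mul_comm]
    exact mul_le_mul_of_nonneg_right (hM t) (norm_nonneg _)

namespace BoundedONS
variable {M : ℝ} {e : ℕ → Ω → ℝ}

theorem exists_measure_fourierSum_le [IsProbabilityMeasure μ] (he : BoundedONS μ M e)
    (hbdd : ∀ f, Measurable f → Integrable f μ →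
      ∀ᵐ x ∂μ, ∃ B, ∀ m, |fourierSum μ e f m x| ≤ B) {ε : ENNReal} (hε : ε ≠ 0) :
    ∃ C : ℝ, 0 < C ∧ ∀ f, Integrable f μ → ∫ x, |f x| ∂μ ≤ 1 →
      μ {x | ∃ m, C < |fourierSum μ e f m x|} ≤ ε := by
  choose c hc using fun n => exists_clm_integral_mul (μ := μ) (he.measurable n) (he.abs_le n)
  have hT : ∀ m x f, (∑ n ∈ Finset.range m, e n x • c n) f = fourierSum μ e f m x :=
    fun m x f => by
      simp [fourierSum, hc, mul_comm]
  obtain ⟨C, hC, h⟩ := exists_measure_exists_lt_abs_le (μ := μ)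
    (T := fun m x => ∑ n ∈ Finset.range m, e n x • c n) (fun m f => by
      simp only [hT]
      exact Finset.measurable_sum _ fun n _ => (he.measurable n).const_mul _) (fun f => by
      simp only [hT]
      obtain ⟨g, hg, hfg⟩ := (Lp.aestronglyMeasurable f)
      rw [fourierSum_congr_ae hfg]
      exact hbdd g hg.measurable ((L1.integrable_coeFn f).congr hfg)) hε
  refine ⟨C, hC, fun f hf hf1 => ?_⟩
  have h1 := h (hf.toL1 f) (by
    rw [L1.norm_eq_integral_norm]
    refine le_trans (le_of_eq (integral_congr_ae ?_)) hf1
    filter_upwards [hf.coeFn_toL1] with x hx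
    rw [hx, Real.norm_eq_abs])
  simp only [hT] at h1
  rwa [fourierSum_congr_ae hf.coeFn_toL1] at h1

theorem ae_measure_close_pos (he : BoundedONS μ M e) :
    ∀ᵐ s ∂μ, ∀ N : ℕ, ∀ η > 0, 0 < μ {u | ∀ n < N, |e n u - e n s| ≤ η} := by
  set Φ : Ω → ℕ → ℝ := fun s n => e n s with hΦ
  have hΦm : Measurable Φ := measurable_pi_lambda _ he.measurable
  have h1 : ∀ᵐ y ∂(μ.map Φ), y ∈ (μ.map Φ).support := Measure.support_mem_ae
  filter_upwards [ae_of_ae_map hΦm.aemeasurable h1] with s hs N η hη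
  set V : Set (ℕ → ℝ) := ⋂ n ∈ Finset.range N, {z | |z n - e n s| < η} with hV
  have hVo : IsOpen V := isOpen_biInter_finset fun n _ =>
    isOpen_lt (by fun_prop) continuous_const
  have hVmem : Φ s ∈ V := by simp [hV, hΦ, hη]
  have h2 := (Measure.mem_support_iff_forall _).1 hs V (hVo.mem_nhds hVmem)
  rw [Measure.map_apply hΦm hVo.measurableSet] at h2
  refine h2.trans_le (measure_mono fun u hu n hn => ?_)
  have h3 := mem_iInter₂.1 hu n (Finset.mem_range.2 hn)
  exact le_of_lt h3

/-- Partial sums of averages of point masses obey the weak-type bound valid for `L¹`. -/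
theorem measure_dirichletKernel_le [IsProbabilityMeasure μ] (he : BoundedONS μ M e) {C : ℝ}
    {ε : ENNReal} (hC : ∀ f, Integrable f μ → ∫ x, |f x| ∂μ ≤ 1 →
      μ {x | ∃ m, C < |fourierSum μ e f m x|} ≤ ε) {p : ℕ} (hp : 0 < p) {t : Fin p → Ω}
    (ht : ∀ j, ∀ N : ℕ, ∀ η > 0, 0 < μ {u | ∀ n < N, |e n u - e n (t j)| ≤ η}) :
    μ {x | ∃ m, p * (C + 1) < |∑ j, dirichletKernel e m x (t j)|} ≤ ε := by
  have hM := he.one_le_bound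
  have hp' : (0 : ℝ) < p := by exact_mod_cast hp
  set W : ℕ → Set Ω := fun N => {x | ∃ m ≤ N, p * (C + 1) < |∑ j, dirichletKernel e m x (t j)|}
    with hW
  have hWmono : Monotone W := fun N N' h x ⟨m, hm, hx⟩ => ⟨m, hm.trans h, hx⟩
  have hunion : {x | ∃ m, p * (C + 1) < |∑ j, dirichletKernel e m x (t j)|} = ⋃ N, W N := by
    ext x
    simp only [hW, mem_ofPred_eq, mem_iUnion]
    exact ⟨fun ⟨m, hm⟩ => ⟨m, m, le_rfl, hm⟩, fun ⟨_, m, _, hm⟩ => ⟨m, hm⟩⟩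
  rw [hunion, hWmono.measure_iUnion]
  refine iSup_le fun N => ?_
  set η : ℝ := 1 / ((N + 1) * M) with hη
  have hη0 : 0 < η := by positivity
  set Q : Fin p → Set Ω := fun j => {u | ∀ n < N, |e n u - e n (t j)| ≤ η} with hQ
  have hQm : ∀ j, MeasurableSet (Q j) := fun j => by
    have : Q j = ⋂ n, ⋂ (_ : n < N), {u | |e n u - e n (t j)| ≤ η} := by ext u; simp [hQ]
    rw [this]
    exact MeasurableSet.iInter fun n => MeasurableSet.iInter fun _ =>
      measurableSet_le ((he.measurable n).sub_const _).abs measurable_const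
  have hQ0 : ∀ j, 0 < μ.real (Q j) := fun j =>
    ENNReal.toReal_pos (ht j N η hη0).ne' (measure_ne_top _ _)
  set a : Fin p → ℝ := fun j => (p * μ.real (Q j))⁻¹ with ha
  have ha0 : ∀ j, 0 ≤ a j := fun j => by have := hQ0 j; positivity
  set f : Ω → ℝ := fun s => ∑ j, a j * (Q j).indicator (fun _ => (1 : ℝ)) s with hf
  have hind : ∀ j, Integrable (fun s => a j * (Q j).indicator (fun _ => (1 : ℝ)) s) μ := fun j =>
    ((integrable_const (1 : ℝ)).indicator (hQm j)).const_mul _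
  have hfint : Integrable f μ := integrable_finsetSum _ fun j _ => hind j
  have hf0 : ∀ s, 0 ≤ f s := fun s => Finset.sum_nonneg fun j _ =>
    mul_nonneg (ha0 j) (indicator_nonneg (fun _ _ => zero_le_one) _)
  have hf1 : ∫ s, |f s| ∂μ ≤ 1 := by
    simp only [abs_of_nonneg (hf0 _)]
    simp only [hf]
    rw [integral_finsetSum _ fun j _ => hind j]
    have : ∀ j, ∫ s, a j * (Q j).indicator (fun _ => (1 : ℝ)) s ∂μ = 1 / p := fun j => by
      rw [integral_const_mul, integral_indicator (hQm j)]
      have := (hQ0 j).ne'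
      simp [ha]
      field_simp
    simp only [this]
    simp [hp'.ne']
  refine (measure_mono fun x hx => ?_).trans (hC f hfint hf1)
  obtain ⟨m, hmN, hm⟩ := hx
  refine ⟨m, ?_⟩
  have hcoef : ∀ n < N, |p * (∫ s, f s * e n s ∂μ) - ∑ j, e n (t j)| ≤ p * η := by
    intro n hn
    have heint : Integrable (e n) μ := integrable_of_abs_le (he.measurable n) (he.abs_le n)
    have h1 : ∫ s, f s * e n s ∂μ = ∑ j, a j * ∫ s in Q j, e n s ∂μ := by
      have e1 : ∀ s, f s * e n s = ∑ j, a j * (Q j).indicator (e n) s := fun s => by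
        simp only [hf, Finset.sum_mul]
        refine Finset.sum_congr rfl fun j _ => ?_
        by_cases hs : s ∈ Q j <;> simp [hs]
      simp only [e1]
      rw [integral_finsetSum _ fun j _ => (heint.indicator (hQm j)).const_mul _]
      exact Finset.sum_congr rfl fun j _ => by
        rw [integral_const_mul, integral_indicator (hQm j)]
    have h2 : ∀ j, |p * (a j * ∫ s in Q j, e n s ∂μ) - e n (t j)| ≤ η := fun j => by
      have h3 : ‖∫ s in Q j, (e n s - e n (t j)) ∂μ‖ ≤ η * μ.real (Q j) :=
        norm_setIntegral_le_of_norm_le_const (measure_lt_top _ _) fun s (hs : s ∈ Q j) => hs n hn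
      rw [integral_sub heint.integrableOn (integrable_const _)] at h3
      simp only [integral_const, measureReal_restrict_apply_univ, smul_eq_mul] at h3
      have h4 := hQ0 j
      have h5 : p * (a j * ∫ s in Q j, e n s ∂μ) - e n (t j) =
          (∫ s in Q j, e n s ∂μ - μ.real (Q j) * e n (t j)) / μ.real (Q j) := by
        simp only [ha]
        field_simp
      rw [h5, abs_div, abs_of_pos h4, div_le_iff₀ h4]
      exact h3
    rw [h1, Finset.mul_sum, ← Finset.sum_sub_distrib]
    calc |∑ j, (p * (a j * ∫ s in Q j, e n s ∂μ) - e n (t j))|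
        ≤ ∑ j : Fin p, η :=
          (Finset.abs_sum_le_sum_abs _ _).trans (Finset.sum_le_sum fun j _ => h2 j)
      _ = p * η := by simp
  have hdiff : |p * fourierSum μ e f m x - ∑ j, dirichletKernel e m x (t j)| ≤ p := by
    have e2 : p * fourierSum μ e f m x - ∑ j, dirichletKernel e m x (t j) =
        ∑ n ∈ Finset.range m, (p * (∫ s, f s * e n s ∂μ) - ∑ j, e n (t j)) * e n x := by
      simp only [fourierSum, dirichletKernel]
      rw [Finset.sum_comm, Finset.mul_sum, ← Finset.sum_sub_distrib]
      refine Finset.sum_congr rfl fun n _ => ?_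
      rw [← Finset.mul_sum]
      ring
    rw [e2]
    calc _ ≤ ∑ n ∈ Finset.range m, p * η * M :=
          (Finset.abs_sum_le_sum_abs _ _).trans (Finset.sum_le_sum fun n hn => by
            rw [abs_mul]
            exact mul_le_mul (hcoef n ((Finset.mem_range.1 hn).trans_le hmN)) (he.abs_le n x)
              (abs_nonneg _) (by positivity))
      _ = p * (m / (N + 1)) := by
          rw [Finset.sum_const, Finset.card_range, nsmul_eq_mul, hη]
          field_simp
      _ ≤ p * 1 := by
          refine mul_le_mul_of_nonneg_left ?_ hp'.le
          rw [div_le_one (by positivity)]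
          have : (m : ℝ) ≤ N := by exact_mod_cast hmN
          linarith
      _ = p := mul_one _
  have h6 := abs_sub_abs_le_abs_sub (∑ j, dirichletKernel e m x (t j)) (p * fourierSum μ e f m x)
  rw [abs_sub_comm, abs_mul, abs_of_pos hp'] at h6
  have h7 : p * C < p * |fourierSum μ e f m x| := by linarith
  exact lt_of_mul_lt_mul_left h7 hp'.le

/-- A bounded orthonormal system admits an integrable function whose partial sums are not bounded
almost everywhere. -/
theorem exists_not_ae_bounded [IsProbabilityMeasure μ] (he : BoundedONS μ M e) :
    ∃ f, Measurable f ∧ Integrable f μ ∧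
      ¬ ∀ᵐ x ∂μ, ∃ B, ∀ m, |fourierSum μ e f m x| ≤ B := by
  by_contra! hcon
  have hM := he.one_le_bound
  obtain ⟨C, hC0, hC⟩ := he.exists_measure_fourierSum_le hcon
    (ε := ENNReal.ofReal (1 / (8 * M ^ 2))) (by
      rw [Ne, ENNReal.ofReal_eq_zero, not_le]; positivity)
  obtain ⟨p, hp, X, hX, hXμ, hXx⟩ := he.exists_measure_pi_kernel_le (C := C + 1) (by linarith)
  set ν := Measure.pi fun _ : Fin p => μ with hν
  set Z : Set (Ω × (Fin p → Ω)) :=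
    {z | ∃ m, p * (C + 1) < |∑ j, dirichletKernel e m z.1 (z.2 j)|} with hZ
  have hZm : MeasurableSet Z := by
    have : Z = ⋃ m, {z | p * (C + 1) < |∑ j, dirichletKernel e m z.1 (z.2 j)|} := by
      ext z; simp [hZ]
    rw [this]
    refine MeasurableSet.iUnion fun m => measurableSet_lt measurable_const (Measurable.abs ?_)
    refine Finset.measurable_sum _ fun j _ => Finset.measurable_sum _ fun n _ => ?_
    exact ((he.measurable n).comp measurable_fst).mul
      ((he.measurable n).comp ((measurable_pi_apply j).comp measurable_snd))
  have hgood : ∀ᵐ t ∂ν, ∀ j, ∀ N : ℕ, ∀ η > 0,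
      0 < μ {u | ∀ n < N, |e n u - e n (t j)| ≤ η} :=
    ae_all_iff.2 fun j => (measurePreserving_eval (fun _ : Fin p => μ) j).quasiMeasurePreserving.ae
      he.ae_measure_close_pos
  have hupper : (μ.prod ν) Z ≤ ENNReal.ofReal (1 / (8 * M ^ 2)) := by
    rw [Measure.prod_apply_symm hZm]
    calc ∫⁻ t, μ ((fun x => (x, t)) ⁻¹' Z) ∂ν
        ≤ ∫⁻ _, ENNReal.ofReal (1 / (8 * M ^ 2)) ∂ν :=
          lintegral_mono_ae (hgood.mono fun t ht => he.measure_dirichletKernel_le hC hp ht)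
      _ = _ := by simp
  have hlower : ENNReal.ofReal (1 / (4 * M ^ 2)) ≤ (μ.prod ν) Z := by
    rw [Measure.prod_apply hZm]
    calc ENNReal.ofReal (1 / (4 * M ^ 2))
        = ENNReal.ofReal (1 / 2) * ENNReal.ofReal (1 / (2 * M ^ 2)) := by
          rw [← ENNReal.ofReal_mul (by positivity)]
          congr 1
          field_simp
          norm_num
      _ ≤ ENNReal.ofReal (1 / 2) * μ X := mul_le_mul_right hXμ _
      _ = ∫⁻ _ in X, ENNReal.ofReal (1 / 2) ∂μ := by simp
      _ ≤ ∫⁻ x in X, ν (Prod.mk x ⁻¹' Z) ∂μ := by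
          refine setLIntegral_mono' hX fun x hx => ?_
          have h1 := hXx x hx
          have h2 : (Prod.mk x ⁻¹' Z)ᶜ =
              {t | ∀ m, |∑ j, dirichletKernel e m x (t j)| ≤ p * (C + 1)} := by
            ext t; simp [hZ]
          have h3 : ν (Prod.mk x ⁻¹' Z)ᶜ ≤ ENNReal.ofReal (1 / 2) := by rw [h2]; exact h1
          have h4 := prob_add_prob_compl (μ := ν) (measurable_prodMk_left (x := x) hZm)
          have h5 : ENNReal.ofReal (1 / 2) + ENNReal.ofReal (1 / 2) = 1 := by
            rw [← ENNReal.ofReal_add (by norm_num) (by norm_num)]; norm_num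
          by_contra! h6
          have h7 := ENNReal.add_lt_add_of_lt_of_le (measure_ne_top ν _) h6 h3
          rw [h4, h5] at h7
          exact lt_irrefl _ h7
      _ ≤ ∫⁻ x, ν (Prod.mk x ⁻¹' Z) ∂μ := setLIntegral_le_lintegral _ _
  have h := (ENNReal.ofReal_le_ofReal_iff (by positivity)).1 (hlower.trans hupper)
  rw [div_le_div_iff₀ (by positivity) (by positivity)] at h
  nlinarith

end BoundedONS

end BoundedSystems

theorem IsONS.exists_boundedONS {φ : ℕ → ℝ → ℝ} {M : ℝ} (hONS : IsONS φ)
    (hUB : UnifBounded φ M) : ∃ e : ℕ → ℝ → ℝ,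
      BoundedONS (volume.restrict (Icc (0 : ℝ) 1)) M e ∧
        ∀ n, e n =ᵐ[volume.restrict (Icc (0 : ℝ) 1)] φ (n + 1) := by
  have hae : ∀ n, (fun x => max (-M) (min M (φ (n + 1) x)))
      =ᵐ[volume.restrict (Icc (0 : ℝ) 1)] φ (n + 1) := fun n => by
    filter_upwards [hUB.2 (n + 1) (by omega)] with x hx
    obtain ⟨h1, h2⟩ := abs_le.1 hx
    rw [min_eq_right h2, max_eq_right h1]
  refine ⟨fun n x => max (-M) (min M (φ (n + 1) x)), ⟨fun n => ?_, fun n x => ?_, fun n m => ?_⟩,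
    hae⟩
  · exact measurable_const.max (measurable_const.min (hONS.1 (n + 1) (by omega)))
  · exact abs_le.2 ⟨le_max_left _ _, max_le (by linarith [hUB.1]) (min_le_left _ _)⟩
  · refine (integral_congr_ae ((hae n).mul (hae m))).trans ?_
    simpa using hONS.2 (n + 1) (m + 1) (by omega) (by omega)

theorem ae_partialSum_eq_fourierSum {φ e : ℕ → ℝ → ℝ}
    (h : ∀ n, e n =ᵐ[volume.restrict (Icc (0 : ℝ) 1)] φ (n + 1)) (f : ℝ → ℝ) :
    ∀ᵐ x ∂(volume.restrict (Icc (0 : ℝ) 1)), ∀ m,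
      partialSum φ f m x = fourierSum (volume.restrict (Icc (0 : ℝ) 1)) e f m x := by
  filter_upwards [ae_all_iff.2 h] with x hx m
  have hcoef : ∀ n, fourierCoef φ f (n + 1) =
      ∫ t, f t * e n t ∂(volume.restrict (Icc (0 : ℝ) 1)) := fun n =>
    integral_congr_ae ((ae_eq_refl f).mul (h n).symm)
  induction m with
  | zero => simp [partialSum, fourierSum]
  | succ m ih =>
    rw [partialSum, Finset.sum_Icc_succ_top (by omega), fourierSum, Finset.sum_range_succ,
      hcoef m, hx m]
    exact congrArg (· + _) ih

/-- Bochkarev's theorem: for every uniformly bounded orthonormal system there is an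
integrable function whose Fourier series diverges unboundedly on a set of positive measure. -/
theorem bochkarev_divergence (φ : ℕ → ℝ → ℝ) (M : ℝ)
    (hONS : IsONS φ) (hUB : UnifBounded φ M) :
    ∃ f : ℝ → ℝ, Measurable f ∧ IntegrableOn f (Set.Icc (0:ℝ) 1) ∧
      0 < volume {x ∈ Set.Icc (0:ℝ) 1 |
        ∀ B : ℝ, ∃ m : ℕ, 1 ≤ m ∧ B < |partialSum φ f m x|} := by
  have : IsProbabilityMeasure (volume.restrict (Icc (0 : ℝ) 1)) := ⟨by simp⟩
  obtain ⟨e, he, hae⟩ := hONS.exists_boundedONS hUB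
  obtain ⟨f, hfm, hfi, hf⟩ := he.exists_not_ae_bounded
  refine ⟨f, hfm, hfi, pos_iff_ne_zero.2 fun h0 => hf ?_⟩
  have h1 : ∀ᵐ x ∂(volume.restrict (Icc (0 : ℝ) 1)),
      ¬ ∀ B : ℝ, ∃ m : ℕ, 1 ≤ m ∧ B < |partialSum φ f m x| := by
    rw [ae_restrict_iff' measurableSet_Icc, ae_iff]
    simpa [and_assoc] using h0
  filter_upwards [h1, ae_partialSum_eq_fourierSum hae f] with x hx hS
  push Not at hx
  obtain ⟨B, hB⟩ := hx
  refine ⟨max B 0, fun m => ?_⟩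
  rw [← hS m]
  rcases Nat.eq_zero_or_pos m with rfl | hm
  · simp [partialSum]
  · exact (hB m hm).trans (le_max_left _ _)
end

section
/- Let p, q : [0,1] → [1,∞) be measurable exponents. Then L^{q(·)}[0,1] ⊆ L^{p(·)}[0,1] if and only if p(t) ≤ q(t) for almost every t ∈ [0,1]; moreover, if p(t) ≤ q(t) a.e., then ‖f‖_{p(·)} ≤ 2‖f‖_{q(·)} for every measurable f on [0,1]. -/
open MeasureTheory Set Filter

/-- The Luxemburg norm of `f` in the variable exponent Lebesgue space `L^{q(·)}[0,1]`:
`inf {λ > 0 : ∫_0^1 (|f|/λ)^{q(x)} dx ≤ 1}`, with `inf ∅ = ∞`. -/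
noncomputable def vpNorm (q f : ℝ → ℝ) : ENNReal :=
  sInf {l : ENNReal | ∃ r : ℝ, 0 < r ∧ l = ENNReal.ofReal r ∧
    (∫⁻ x in Set.Icc (0:ℝ) 1, ENNReal.ofReal ((|f x| / r) ^ (q x))) ≤ 1}

theorem half_rpow_le {a s t : ℝ} (ha : 0 ≤ a) (hs : 1 ≤ s) (hst : s ≤ t) :
    (a / 2) ^ s ≤ (1 + a ^ t) / 2 := by
  have h0 : (0:ℝ) ≤ a ^ t := Real.rpow_nonneg ha t
  have h1 : a ^ s ≤ 1 + a ^ t := by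
    rcases le_total a 1 with h | h
    · have := Real.rpow_le_one ha h (by linarith : 0 ≤ s)
      linarith
    · have := Real.rpow_le_rpow_of_exponent_le h hst
      linarith
  have h2 : (2:ℝ) ≤ 2 ^ s := by
    simpa using Real.rpow_le_rpow_of_exponent_le (by norm_num : (1:ℝ) ≤ 2) hs
  rw [Real.div_rpow ha (by norm_num)]
  have h3 : (0:ℝ) ≤ a ^ s := Real.rpow_nonneg ha s
  calc a ^ s / 2 ^ s ≤ a ^ s / 2 := by gcongr
    _ ≤ _ := by gcongr

/-- If `p ≤ q` almost everywhere, then twice an admissible radius for `q` is admissible for `p`. -/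
theorem vpNorm_le_two_mul_vpNorm {p q f : ℝ → ℝ} (hqm : Measurable q) (hf : Measurable f)
    (hp1 : ∀ t ∈ Icc (0:ℝ) 1, 1 ≤ p t)
    (hpq : ∀ᵐ t ∂(volume.restrict (Icc (0:ℝ) 1)), p t ≤ q t) :
    vpNorm p f ≤ 2 * vpNorm q f := by
  rw [mul_comm, ← ENNReal.div_le_iff_le_mul (by simp) (by simp)]
  refine le_sInf ?_
  rintro _ ⟨r, hr, rfl, hint⟩
  rw [ENNReal.div_le_iff_le_mul (by simp) (by simp)]
  refine sInf_le ⟨r * 2, by positivity, ?_, ?_⟩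
  · rw [ENNReal.ofReal_mul hr.le]
    simp
  have hmeas : Measurable fun x => ENNReal.ofReal ((|f x| / r) ^ q x) := by fun_prop
  calc ∫⁻ x in Icc (0:ℝ) 1, ENNReal.ofReal ((|f x| / (r * 2)) ^ p x)
      ≤ ∫⁻ x in Icc (0:ℝ) 1, (1 + ENNReal.ofReal ((|f x| / r) ^ q x)) / 2 := by
        refine lintegral_mono_ae ?_
        filter_upwards [hpq, ae_restrict_mem measurableSet_Icc] with x hx hx01
        have h := half_rpow_le (a := |f x| / r) (by positivity) (hp1 x hx01) hx
        rw [div_div] at h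
        refine (ENNReal.ofReal_le_ofReal h).trans_eq ?_
        rw [ENNReal.ofReal_div_of_pos (by norm_num),
          ENNReal.ofReal_add (by norm_num) (by positivity)]
        simp
    _ = (1 + ∫⁻ x in Icc (0:ℝ) 1, ENNReal.ofReal ((|f x| / r) ^ q x)) / 2 := by
        simp_rw [ENNReal.div_eq_inv_mul]
        rw [lintegral_const_mul _ (by fun_prop), lintegral_add_right _ hmeas]
        simp
    _ ≤ (1 + 1) / 2 := by gcongr
    _ = 1 := by rw [one_add_one_eq_two, ENNReal.div_self (by simp) (by simp)]

/-- A set of positive Lebesgue measure has measurable subsets of arbitrarily small positive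
measure. -/
theorem exists_measurableSet_subset_volume_le {B : Set ℝ} (hB : MeasurableSet B)
    (hpos : volume B ≠ 0) {a : ℝ} (ha : 0 < a) :
    ∃ E ⊆ B, MeasurableSet E ∧ 0 < (volume E).toReal ∧ (volume E).toReal ≤ a ∧
      volume E ≠ ⊤ := by
  obtain ⟨x, -, hx⟩ := exists_mem_forall_mem_nhdsWithin_pos_measure hpos
  have hle : volume (B ∩ Metric.ball x (a / 2)) ≤ ENNReal.ofReal a := by
    refine (measure_mono inter_subset_right).trans_eq ?_
    rw [Real.volume_ball]
    congr 1
    ring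
  have htop := ne_top_of_le_ne_top ENNReal.ofReal_ne_top hle
  have hp := hx (B ∩ Metric.ball x (a / 2))
    (inter_mem self_mem_nhdsWithin
      (mem_nhdsWithin_of_mem_nhds (Metric.ball_mem_nhds x (by positivity))))
  exact ⟨_, inter_subset_left, hB.inter measurableSet_ball, ENNReal.toReal_pos hp.ne' htop,
    ENNReal.toReal_le_of_le_ofReal ha.le hle, htop⟩

/-- For every set `B` of positive measure there is a function `h` of integral at most one such that
the integral of `h ^ (1 + 1 / K)` over `B` is infinite, as witnessed by constant lower bounds for
`h` on suitable subsets of `B`. -/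
theorem exists_lintegral_le_one_of_volume_ne_zero {B : Set ℝ} (hB : MeasurableSet B)
    (hpos : volume B ≠ 0) (K : ℕ) (hK : K ≠ 0) :
    ∃ h : ℝ → ENNReal, Measurable h ∧ ∫⁻ x, h x ≤ 1 ∧
      ∀ n : ℕ, ∃ E ⊆ B, MeasurableSet E ∧ ∃ c : ℝ, 1 ≤ c ∧
        (∀ x ∈ E, ENNReal.ofReal c ≤ h x) ∧
        ENNReal.ofReal (2 ^ (n + 1)) ≤ ENNReal.ofReal (c ^ (1 + 1 / (K : ℝ))) * volume E := by
  have hE := fun n : ℕ => exists_measurableSet_subset_volume_le hB hpos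
    (a := (2 ^ (n + 1) * (4 ^ (n + 1)) ^ K)⁻¹) (by positivity)
  choose E hEB hEm hE0 hEle hEtop using hE
  let c : ℕ → ℝ := fun n => (2 ^ (n + 1) * (volume (E n)).toReal)⁻¹
  have hcE : ∀ n, c n * (volume (E n)).toReal = (2 ^ (n + 1))⁻¹ := fun n => by
    have := (hE0 n).ne'
    simp only [c]
    field_simp
  have hcle : ∀ n, ((4:ℝ) ^ (n + 1)) ^ K ≤ c n := fun n => by
    have h1 := hE0 n
    refine (le_inv_comm₀ (by positivity) (by positivity)).2 ?_
    calc (2:ℝ) ^ (n + 1) * (volume (E n)).toReal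
        ≤ 2 ^ (n + 1) * (2 ^ (n + 1) * (4 ^ (n + 1)) ^ K)⁻¹ := by gcongr; exact hEle n
      _ = _ := by field_simp
  have hc1 : ∀ n, 1 ≤ c n := fun n =>
    (one_le_pow₀ (one_le_pow₀ (by norm_num))).trans (hcle n)
  have hvol : ∀ n, ENNReal.ofReal (volume (E n)).toReal = volume (E n) := fun n =>
    ENNReal.ofReal_toReal (hEtop n)
  refine ⟨fun x => ∑' n, (E n).indicator (fun _ => ENNReal.ofReal (c n)) x,
    Measurable.tsum fun n => measurable_const.indicator (hEm n), ?_, fun n =>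
      ⟨E n, hEB n, hEm n, c n, hc1 n, fun x hx => ?_, ?_⟩⟩
  · rw [lintegral_tsum fun n => (measurable_const.indicator (hEm n)).aemeasurable]
    refine le_of_eq ?_
    have hgeom : ∑' n : ℕ, (2⁻¹ : ENNReal) ^ (n + 1) = 1 := by
      rw [ENNReal.tsum_geometric_add_one, ENNReal.one_sub_inv_two,
        ENNReal.mul_inv_cancel (by simp) (by simp)]
    rw [← hgeom]
    refine tsum_congr fun n => ?_
    rw [lintegral_indicator_const (hEm n), ← hvol n,
      ← ENNReal.ofReal_mul (by linarith [hc1 n]), hcE n, ENNReal.ofReal_inv_of_pos (by positivity),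
      ENNReal.ofReal_pow (by norm_num), ENNReal.ofReal_ofNat, ENNReal.inv_pow]
  · refine le_trans ?_ (ENNReal.le_tsum n)
    simp [hx]
  · rw [← hvol n, ← ENNReal.ofReal_mul (Real.rpow_nonneg (by linarith [hc1 n]) _)]
    refine ENNReal.ofReal_le_ofReal ?_
    have h0 : 0 < c n := by linarith [hc1 n]
    have h4 : (4:ℝ) ^ (n + 1) ≤ c n ^ (1 / (K : ℝ)) := by
      rw [one_div, Real.le_rpow_inv_iff_of_pos (by positivity) h0.le (by positivity),
        Real.rpow_natCast]
      exact hcle n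
    rw [Real.rpow_add h0, Real.rpow_one, mul_right_comm, hcE]
    calc (2:ℝ) ^ (n + 1) = (2 ^ (n + 1))⁻¹ * 4 ^ (n + 1) := by
          rw [show (4:ℝ) = 2 * 2 by norm_num, mul_pow]
          field_simp
      _ ≤ _ := by gcongr

/-- If `p` exceeds `q` on a set of positive measure, then some measurable function of finite
`q`-norm has infinite `p`-norm. -/
theorem exists_vpNorm_lt_top_and_eq_top {p q : ℝ → ℝ} (hpm : Measurable p) (hqm : Measurable q)
    (hq1 : ∀ t ∈ Icc (0:ℝ) 1, 1 ≤ q t)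
    (hpq : ¬ ∀ᵐ t ∂(volume.restrict (Icc (0:ℝ) 1)), p t ≤ q t) :
    ∃ f : ℝ → ℝ, Measurable f ∧ vpNorm q f < ⊤ ∧ vpNorm p f = ⊤ := by
  let B : ℕ → Set ℝ := fun k =>
    {t | q t + 1 / ((k : ℝ) + 1) ≤ p t} ∩ {t | p t ≤ (k : ℝ) + 1} ∩ Icc (0:ℝ) 1
  have hBm : ∀ k, MeasurableSet (B k) := fun k =>
    ((measurableSet_le (by fun_prop) hpm).inter (measurableSet_le hpm measurable_const)).inter
      measurableSet_Icc
  obtain ⟨k, hk⟩ : ∃ k, volume (B k) ≠ 0 := by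
    by_contra! hcon
    refine hpq ?_
    rw [ae_restrict_iff' measurableSet_Icc]
    refine measure_mono_null ?_ (measure_iUnion_null hcon)
    intro t ht
    simp only [mem_compl_iff, mem_ofPred_eq, Classical.not_imp, not_le] at ht
    obtain ⟨ht01, ht⟩ := ht
    obtain ⟨m, hm⟩ := exists_nat_one_div_lt (sub_pos.2 ht)
    obtain ⟨l, hl⟩ := exists_nat_ge (p t)
    refine mem_iUnion.2 ⟨max m l, ⟨?_, ?_⟩, ht01⟩
    · have : 1 / (((max m l : ℕ) : ℝ) + 1) ≤ 1 / ((m : ℝ) + 1) := by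
        gcongr
        exact le_max_left m l
      simp only [mem_ofPred_eq]
      linarith
    · have : (l : ℝ) ≤ (max m l : ℕ) := by
        gcongr
        exact le_max_right m l
      simp only [mem_ofPred_eq]
      linarith
  obtain ⟨h, hhm, hh1, hh⟩ := exists_lintegral_le_one_of_volume_ne_zero (hBm k) hk ((k + 1) ^ 2)
    (by positivity)
  have hfin : ∀ᵐ x, h x < ⊤ := ae_lt_top hhm (ne_top_of_le_ne_top ENNReal.one_ne_top hh1)
  refine ⟨fun x => (h x).toReal ^ (1 / q x), by fun_prop, ?_, ?_⟩
  · refine lt_of_le_of_lt (sInf_le ⟨1, one_pos, rfl, ?_⟩) ENNReal.ofReal_lt_top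
    refine le_trans ?_ ((setLIntegral_le_lintegral (Icc (0:ℝ) 1) h).trans hh1)
    refine setLIntegral_mono hhm fun x hx => ?_
    have hq0 : q x ≠ 0 := by linarith [hq1 x hx]
    rw [div_one, abs_of_nonneg (by positivity), ← Real.rpow_mul (by positivity),
      one_div_mul_cancel hq0, Real.rpow_one]
    exact ENNReal.ofReal_toReal_le
  · refine sInf_eq_top.2 ?_
    rintro _ ⟨r, hr, rfl, hint⟩
    exfalso
    let R := max r 1
    have hR1 : 1 ≤ R := le_max_right r 1
    have hR0 : 0 < R := by linarith
    obtain ⟨n, hn⟩ := pow_unbounded_of_one_lt (R ^ (k + 1)) (one_lt_two : (1:ℝ) < 2)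
    obtain ⟨E, hEB, hEm, c, hc1, hch, hcE⟩ := hh n
    have hbound : ENNReal.ofReal (c ^ (1 + 1 / (((k + 1) ^ 2 : ℕ) : ℝ)) / R ^ (k + 1)) * volume E
        ≤ 1 := by
      refine le_trans ?_ hint
      refine le_trans ?_ (lintegral_mono_set (hEB.trans inter_subset_right))
      rw [← setLIntegral_const]
      refine lintegral_mono_ae ?_
      filter_upwards [ae_restrict_mem hEm, ae_restrict_of_ae hfin] with x hx hxfin
      obtain ⟨⟨hqp, hpk⟩, hx01⟩ := hEB hx
      simp only [mem_ofPred_eq] at hqp hpk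
      have hq := hq1 x hx01
      have hk0 : 0 < 1 / ((k : ℝ) + 1) := by positivity
      have hcx : c ≤ (h x).toReal :=
        (ENNReal.ofReal_le_iff_le_toReal hxfin.ne).1 (hch x hx)
      have hexp : 1 + 1 / (((k + 1) ^ 2 : ℕ) : ℝ) ≤ 1 / q x * p x := by
        have h1 : 1 + 1 / ((k : ℝ) + 1) / q x ≤ 1 / q x * p x := by
          rw [one_div_mul_eq_div, le_div_iff₀ (by linarith), add_mul,
            div_mul_cancel₀ _ (by linarith)]
          linarith
        refine le_trans ?_ h1
        rw [div_div]
        push_cast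
        rw [sq]
        gcongr
        linarith
      refine ENNReal.ofReal_le_ofReal ?_
      rw [abs_of_nonneg (by positivity), Real.div_rpow (by positivity) hr.le,
        ← Real.rpow_mul (by positivity)]
      have hrR : r ^ p x ≤ R ^ (k + 1) := by
        rw [← Real.rpow_natCast]
        push_cast
        exact (Real.rpow_le_rpow hr.le (le_max_left r 1) (by linarith)).trans
          (Real.rpow_le_rpow_of_exponent_le hR1 hpk)
      have hnum : c ^ (1 + 1 / (((k + 1) ^ 2 : ℕ) : ℝ)) ≤ (h x).toReal ^ (1 / q x * p x) :=
        (Real.rpow_le_rpow_of_exponent_le hc1 hexp).trans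
          (Real.rpow_le_rpow (by linarith) hcx (le_trans (by positivity) hexp))
      gcongr
    have hRn : R ^ (k + 1) < 2 ^ (n + 1) :=
      hn.trans_le (pow_le_pow_right₀ one_le_two n.le_succ)
    rw [ENNReal.ofReal_div_of_pos (by positivity), ENNReal.mul_comm_div, mul_div_assoc',
      ENNReal.div_le_iff (by simpa using by positivity) (by simp), one_mul] at hbound
    have := hcE.trans hbound
    rw [ENNReal.ofReal_le_ofReal_iff (by positivity)] at this
    exact absurd this (not_le.2 hRn)

/-- Embedding of variable exponent Lebesgue spaces: `L^{q(·)}[0,1] ⊆ L^{p(·)}[0,1]`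
iff `p ≤ q` a.e. on `[0,1]`, in which case `‖f‖_{p(·)} ≤ 2‖f‖_{q(·)}` for every
measurable `f`. -/
theorem variable_exponent_embedding (p q : ℝ → ℝ)
    (hpm : Measurable p) (hqm : Measurable q)
    (hp1 : ∀ t ∈ Set.Icc (0:ℝ) 1, 1 ≤ p t) (hq1 : ∀ t ∈ Set.Icc (0:ℝ) 1, 1 ≤ q t) :
    ((∀ f : ℝ → ℝ, Measurable f → vpNorm q f < ⊤ → vpNorm p f < ⊤) ↔
      (∀ᵐ t ∂(volume.restrict (Set.Icc (0:ℝ) 1)), p t ≤ q t)) ∧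
    ((∀ᵐ t ∂(volume.restrict (Set.Icc (0:ℝ) 1)), p t ≤ q t) →
      ∀ f : ℝ → ℝ, Measurable f → vpNorm p f ≤ 2 * vpNorm q f) := by
  refine ⟨⟨fun hemb => ?_, fun hpq f hf hfq => ?_⟩, fun hpq f hf =>
    vpNorm_le_two_mul_vpNorm hqm hf hp1 hpq⟩
  · by_contra hpq
    obtain ⟨f, hf, hfq, hfp⟩ := exists_vpNorm_lt_top_and_eq_top hpm hqm hq1 hpq
    exact (hemb f hf hfq).ne hfp
  · exact (vpNorm_le_two_mul_vpNorm hqm hf hp1 hpq).trans_lt (ENNReal.mul_lt_top (by simp) hfq)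
end

section
/- Let Φ be a uniformly bounded orthonormal system on [0,1], let α > 0, and suppose that for each i ∈ ℕ there is a function g_i ∈ L¹[0,1] with ‖g_i‖_1 ≤ 2^{−i} and m({x ∈ (0,1) : S*(g_i, x) > 2^i}) > α. Then there is a strictly increasing sequence of indices i_1 < i_2 < ⋯ such that the function f(x) = Σ_{k=1}^∞ g_{i_k}(x) belongs to L¹[0,1] and the set of points x at which sup_{m≥1} |S_m(f,x)| = ∞ has positive Lebesgue measure. -/
open MeasureTheory Set Filter

open scoped ENNReal

/-- If countably many measurable sets have measure at least `a`, so has their `limsup`. -/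
theorem le_measure_frequently {Ω : Type*} [MeasurableSpace Ω] {μ : Measure Ω} [IsFiniteMeasure μ]
    {E : ℕ → Set Ω} (hE : ∀ k, MeasurableSet (E k)) {a : ℝ≥0∞} (ha : ∀ k, a ≤ μ (E k)) :
    a ≤ μ {x | ∃ᶠ k in atTop, x ∈ E k} := by
  have hset : {x | ∃ᶠ k in atTop, x ∈ E k} = ⋂ n, ⋃ k ≥ n, E k := by
    ext x
    simp [frequently_atTop]
  rw [hset]
  refine ge_of_tendsto' (tendsto_measure_iInter_atTop (μ := μ) (fun n => ?_) ?_ ?_) fun n => ?_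
  · exact (MeasurableSet.biUnion (Set.to_countable _) fun k _ => hE k).nullMeasurableSet
  · intro n m hnm
    exact Set.biUnion_subset_biUnion_left fun k (hk : m ≤ k) => hnm.trans hk
  · exact ⟨0, measure_ne_top _ _⟩
  · exact (ha n).trans (measure_mono (Set.subset_biUnion_of_mem (u := E) (le_refl n)))

/-- An integer sequence can be made to grow as fast as prescribed by a recursion. -/
theorem exists_strictMono_le_succ (H : ℕ → ℕ) :
    ∃ idx : ℕ → ℕ, StrictMono idx ∧ ∀ k, H (idx k) ≤ idx (k + 1) := by
  refine ⟨fun k => (fun n => max (n + 1) (H n))^[k] 0, strictMono_nat_of_lt_succ fun k => ?_,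
    fun k => ?_⟩ <;> simp only [Function.iterate_succ_apply']
  · exact lt_of_lt_of_le (Nat.lt_succ_self _) (le_max_left _ _)
  · exact le_max_right _ _

/-- An a.e. pointwise bounded sequence of measurable functions is uniformly bounded off a set of
small measure. -/
theorem exists_measure_unbounded_lt {Ω : Type*} [MeasurableSpace Ω] {μ : Measure Ω}
    [IsFiniteMeasure μ] {S : ℕ → Ω → ℝ} (hS : ∀ m, Measurable (S m))
    (hb : ∀ᵐ x ∂μ, ∃ A, ∀ m, |S m x| ≤ A) {ε : ℝ≥0∞} (hε : 0 < ε) :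
    ∃ A : ℕ, μ {x | ∃ m, (A : ℝ) < |S m x|} < ε := by
  have hmeas : ∀ A : ℕ, MeasurableSet {x | ∃ m, (A : ℝ) < |S m x|} := fun A => by
    simp only [ofPred_exists]
    exact MeasurableSet.iUnion fun m => measurableSet_lt measurable_const (hS m).abs
  have hlim := tendsto_measure_iInter_atTop (μ := μ)
    (s := fun A : ℕ => {x | ∃ m, (A : ℝ) < |S m x|}) (fun A => (hmeas A).nullMeasurableSet)
    (fun A A' hA x ⟨m, hm⟩ => ⟨m, lt_of_le_of_lt (by exact_mod_cast hA) hm⟩)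
    ⟨0, measure_ne_top _ _⟩
  have hzero : μ (⋂ A : ℕ, {x | ∃ m, (A : ℝ) < |S m x|}) = 0 := by
    refine measure_mono_null (fun x hx => ?_) (ae_iff.1 hb)
    rintro ⟨A, hA⟩
    obtain ⟨n, hn⟩ := exists_nat_ge A
    obtain ⟨m, hm⟩ := Set.mem_iInter.1 hx n
    exact absurd (hA m) (not_le.2 (lt_of_le_of_lt hn hm))
  rw [hzero] at hlim
  exact (hlim.eventually_lt_const hε).exists

/-- A supremum exceeding `c` on a large set already does so over finitely many indices. -/
theorem exists_lt_measure_bounded_index {Ω : Type*} [MeasurableSpace Ω] {μ : Measure Ω}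
    {S : ℕ → Ω → ℝ} {a : ℝ≥0∞} {c : ℝ} (h : a < μ {x | ∃ m, c < |S m x|}) :
    ∃ N : ℕ, a < μ {x | ∃ m ≤ N, c < |S m x|} := by
  have hset : {x | ∃ m, c < |S m x|} = ⋃ N : ℕ, {x | ∃ m ≤ N, c < |S m x|} := by
    ext x
    simp only [mem_ofPred_eq, mem_iUnion]
    exact ⟨fun ⟨m, hm⟩ => ⟨m, m, le_rfl, hm⟩, fun ⟨_, m, _, hm⟩ => ⟨m, hm⟩⟩
  have hmono : Monotone fun N : ℕ => {x | ∃ m ≤ N, c < |S m x|} :=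
    fun N N' hN x ⟨m, hm, hc⟩ => ⟨m, hm.trans hN, hc⟩
  rw [hset, hmono.measure_iUnion] at h
  exact lt_iSup_iff.1 h

/-- The deterministic core of the gluing argument, at one point: the sum of the earlier terms is
bounded by `P`, the later terms decay geometrically, so the `k`-th term dominates. -/
theorem lt_abs_tsum_of_dominant {u : ℕ → ℝ} {k : ℕ} {P T : ℝ}
    (hP : |∑ j ∈ Finset.range k, u j| ≤ P) (hk : T + P + 2 < |u k|)
    (htail : ∀ j, |u (j + (k + 1))| ≤ (1 / 2) ^ j) : T < |∑' j, u j| := by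
  have hs : Summable fun j => u (j + (k + 1)) :=
    Summable.of_norm_bounded summable_geometric_two htail
  have hsum := ((summable_nat_add_iff (k + 1)).1 hs).sum_add_tsum_nat_add (k + 1)
  have ht : |∑' j, u (j + (k + 1))| ≤ 2 :=
    tsum_of_norm_bounded (f := fun j => u (j + (k + 1))) hasSum_geometric_two htail
  rw [← hsum, Finset.sum_range_succ]
  rw [abs_le] at hP ht
  rcases lt_abs.1 hk with h | h
  · exact lt_abs.2 (Or.inl (by linarith))
  · exact lt_abs.2 (Or.inr (by linarith))

/-- The gluing principle for an array of functions `S i m`: if the maximal functions of the rows are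
a.e. finite and the `i`-th one exceeds `2 ^ i` on a set of measure more than `a`, then some
subsequence of the rows sums to a row with infinite maximal function on a set of positive
measure. -/
theorem exists_subseq_tsum_unbounded {Ω : Type*} [MeasurableSpace Ω] {μ : Measure Ω}
    [IsFiniteMeasure μ] {S : ℕ → ℕ → Ω → ℝ} (hS : ∀ i m, Measurable (S i m))
    {C : ℝ} (hC : ∀ᵐ x ∂μ, ∀ i m, |S i m x| ≤ m * C * ((2 : ℝ) ^ i)⁻¹)
    (hb : ∀ i, ∀ᵐ x ∂μ, ∃ A, ∀ m, |S i m x| ≤ A)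
    {a : ℝ≥0∞} (ha : a ≠ 0) (hdiv : ∀ i, a < μ {x | ∃ m, (2 : ℝ) ^ i < |S i m x|}) :
    ∃ idx : ℕ → ℕ, StrictMono idx ∧
      0 < μ {x | ∀ B : ℝ, ∃ m, B < |∑' k, S (idx k) m x|} := by
  obtain ⟨ε, hε, hεa⟩ := ENNReal.exists_pos_sum_of_countable' ha ℕ
  choose A hA using fun i => exists_measure_unbounded_lt (hS i) (hb i) (hε i)
  choose N hN using fun i => exists_lt_measure_bounded_index (hdiv i)
  have hH : ∀ i, ∃ h : ℕ, N i * C ≤ (2 : ℝ) ^ h ∧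
      (i : ℝ) + (∑ j ∈ Finset.range (i + 1), (A j : ℝ)) + 2 ≤ 2 ^ h := fun i =>
    (((tendsto_pow_atTop_atTop_of_one_lt (one_lt_two : (1 : ℝ) < 2)).eventually_ge_atTop _).and
      ((tendsto_pow_atTop_atTop_of_one_lt (one_lt_two : (1 : ℝ) < 2)).eventually_ge_atTop
        _)).exists
  choose H hHN hHA using hH
  obtain ⟨idx, hmono, hidx⟩ := exists_strictMono_le_succ H
  refine ⟨idx, hmono, ?_⟩
  set E : ℕ → Set Ω := fun k => {x | ∃ m ≤ N (idx k), (2 : ℝ) ^ idx k < |S (idx k) m x|}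
  set D : Set Ω := ⋃ i, {x | ∃ m, (A i : ℝ) < |S i m x|}
  have hE : ∀ k, MeasurableSet (E k) := fun k => by
    simp only [E, ofPred_exists, ofPred_and]
    exact MeasurableSet.iUnion fun m => (MeasurableSet.const _).inter
      (measurableSet_lt measurable_const (hS _ m).abs)
  have hlim : a ≤ μ {x | ∃ᶠ k in atTop, x ∈ E k} :=
    le_measure_frequently hE fun k => (hN (idx k)).le
  have hD : μ D < a := ((measure_iUnion_le _).trans
    (ENNReal.tsum_le_tsum fun i => (hA i).le)).trans_lt hεa
  have hpos : 0 < μ ({x | ∃ᶠ k in atTop, x ∈ E k} \ D) :=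
    (tsub_pos_of_lt (hD.trans_le hlim)).trans_le le_measure_sdiff
  refine hpos.trans_le (measure_mono_ae ?_)
  filter_upwards [hC] with x hx
  rintro ⟨hfreq, hxD⟩ B
  have hxA : ∀ i m, |S i m x| ≤ A i := by simpa [D] using hxD
  obtain ⟨b, hB⟩ := exists_nat_ge B
  obtain ⟨k', hk', m, hmN, hm⟩ := frequently_atTop.1 hfreq (b + 1)
  obtain ⟨k, rfl⟩ : ∃ k, k' = k + 1 := ⟨k' - 1, by omega⟩
  refine ⟨m, lt_abs_tsum_of_dominant (k := k + 1)
    (P := ∑ j ∈ Finset.range (idx k + 1), (A j : ℝ)) ?_ ?_ fun j => ?_⟩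
  · calc |∑ j ∈ Finset.range (k + 1), S (idx j) m x|
        ≤ ∑ j ∈ Finset.range (k + 1), |S (idx j) m x| := Finset.abs_sum_le_sum_abs _ _
      _ ≤ ∑ j ∈ Finset.range (k + 1), (A (idx j) : ℝ) := Finset.sum_le_sum fun j _ => hxA _ _
      _ = ∑ i ∈ (Finset.range (k + 1)).image idx, (A i : ℝ) :=
        (Finset.sum_image (f := fun i => (A i : ℝ)) hmono.injective.injOn).symm
      _ ≤ ∑ j ∈ Finset.range (idx k + 1), (A j : ℝ) := by
        refine Finset.sum_le_sum_of_subset_of_nonneg (fun i hi => ?_) fun _ _ _ => by positivity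
        obtain ⟨j, hj, rfl⟩ := Finset.mem_image.1 hi
        have := hmono.monotone (Nat.lt_succ_iff.1 (Finset.mem_range.1 hj))
        exact Finset.mem_range.2 (by omega)
  · have h1 : (2 : ℝ) ^ H (idx k) ≤ 2 ^ idx (k + 1) := pow_le_pow_right₀ one_le_two (hidx k)
    have h2 : (b : ℝ) ≤ idx k := by exact_mod_cast (by omega : b ≤ k).trans (hmono.id_le k)
    linarith [hHA (idx k)]
  · set l := idx (j + (k + 1 + 1))
    have hC0 : 0 ≤ m * C := by
      have := (abs_nonneg _).trans (hx 0 m)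
      simpa using this
    have hmC : (m : ℝ) * C ≤ 2 ^ idx (k + 1 + 1) := by
      rcases Nat.eq_zero_or_pos m with rfl | hmpos
      · simp
      · have hC' : 0 ≤ C := nonneg_of_mul_nonneg_right hC0 (by exact_mod_cast hmpos)
        calc (m : ℝ) * C ≤ N (idx (k + 1)) * C := by gcongr
          _ ≤ 2 ^ H (idx (k + 1)) := hHN _
          _ ≤ 2 ^ idx (k + 1 + 1) := pow_le_pow_right₀ one_le_two (hidx (k + 1))
    have hlj : j + idx (k + 1 + 1) ≤ l := hmono.add_le_nat _ _
    calc |S l m x| ≤ m * C * ((2 : ℝ) ^ l)⁻¹ := hx l m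
      _ ≤ 2 ^ idx (k + 1 + 1) * ((2 : ℝ) ^ (j + idx (k + 1 + 1)))⁻¹ := by
        gcongr
        exact one_le_two
      _ = (1 / 2) ^ j := by
        rw [pow_add]
        field_simp
        simp

/-- The partial sums of the sum of an `L¹`-absolutely convergent series are the sums of the partial
sums, at every point. -/
theorem hasSum_partialSum {φ : ℕ → ℝ → ℝ} {M : ℝ} (hφ : ∀ n, 1 ≤ n → Measurable (φ n))
    (hM : ∀ n, 1 ≤ n → ∀ᵐ t ∂(volume.restrict (Icc (0 : ℝ) 1)), |φ n t| ≤ M)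
    {g : ℕ → ℝ → ℝ} (hgi : ∀ i, IntegrableOn (g i) (Icc (0 : ℝ) 1))
    (hs : Summable fun i => ∫ t in Icc (0 : ℝ) 1, |g i t|) (m : ℕ) (x : ℝ) :
    HasSum (fun k => partialSum φ (g k) m x) (partialSum φ (fun t => ∑' k, g k t) m x) := by
  refine hasSum_sum fun n hn => HasSum.mul_right _ ?_
  have hn1 := (Finset.mem_Icc.1 hn).1
  simp only [fourierCoef, ← tsum_mul_right]
  have hint : ∀ k, IntegrableOn (fun t => g k t * φ n t) (Icc (0 : ℝ) 1) := fun k =>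
    (hgi k).mul_bdd (hφ n hn1).aestronglyMeasurable (hM n hn1)
  refine hasSum_integral_of_summable_integral_norm hint ?_
  refine Summable.of_nonneg_of_le (fun k => integral_nonneg fun _ => norm_nonneg _) (fun k => ?_)
    (hs.mul_right M)
  rw [← integral_mul_const]
  refine integral_mono_ae (hint k).norm ((hgi k).abs.mul_const M) ?_
  filter_upwards [hM n hn1] with t ht
  rw [norm_mul]
  exact mul_le_mul_of_nonneg_left ht (abs_nonneg _)

/-- The sum of an `L¹`-absolutely convergent series is integrable. -/
theorem integrable_tsum_of_summable_integral_abs {Ω : Type*} [MeasurableSpace Ω] {μ : Measure Ω}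
    {g : ℕ → Ω → ℝ} (hgi : ∀ i, Integrable (g i) μ) (hs : Summable fun i => ∫ t, |g i t| ∂μ) :
    Integrable (fun x => ∑' k, g k x) μ := by
  have hfin : ∑' k, ∫⁻ t, ‖g k t‖ₑ ∂μ ≠ ∞ := by
    have heq : ∀ k, ∫⁻ t, ‖g k t‖ₑ ∂μ = ENNReal.ofReal (∫ t, |g k t| ∂μ) := fun k =>
      (ofReal_integral_norm_eq_lintegral_enorm (hgi k)).symm
    simp only [heq]
    exact hs.tsum_ofReal_ne_top
  have hmeas : ∀ k, AEMeasurable (fun t => ‖g k t‖ₑ) μ := fun k => (hgi k).1.enorm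
  have hlt : ∫⁻ t, ∑' k, ‖g k t‖ₑ ∂μ ≠ ∞ := by rwa [lintegral_tsum hmeas]
  have hsum : ∀ᵐ t ∂μ, Summable fun k => g k t := by
    filter_upwards [ae_lt_top' (AEMeasurable.tsum hmeas) hlt] with t ht
    refine Summable.of_norm ?_
    have := ENNReal.summable_toReal ht.ne
    simpa using this
  refine ⟨aestronglyMeasurable_of_tendsto_ae atTop
    (f := fun n t => ∑ k ∈ Finset.range n, g k t)
    (fun n => Finset.aestronglyMeasurable_fun_sum _ fun k _ => (hgi k).1) ?_, ?_⟩
  · filter_upwards [hsum] with t ht using ht.hasSum.tendsto_sum_nat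
  · exact (lintegral_mono fun t => enorm_tsum_le_tsum_enorm).trans_lt hlt.lt_top

theorem measurable_partialSum {φ : ℕ → ℝ → ℝ} (hφ : ∀ n, 1 ≤ n → Measurable (φ n)) (f : ℝ → ℝ)
    (m : ℕ) : Measurable (partialSum φ f m) :=
  Finset.measurable_fun_sum _ fun n hn => (hφ n (Finset.mem_Icc.1 hn).1).const_mul _

theorem abs_fourierCoef_le {φ : ℕ → ℝ → ℝ} {M : ℝ} {n : ℕ}
    (hM : ∀ᵐ t ∂(volume.restrict (Icc (0 : ℝ) 1)), |φ n t| ≤ M)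
    {f : ℝ → ℝ} (hf : IntegrableOn f (Icc (0 : ℝ) 1)) :
    |fourierCoef φ f n| ≤ (∫ t in Icc (0 : ℝ) 1, |f t|) * M := by
  rw [← integral_mul_const]
  refine norm_integral_le_of_norm_le (f := fun t => f t * φ n t) (hf.abs.mul_const M) ?_
  filter_upwards [hM] with t ht
  rw [norm_mul]
  exact mul_le_mul_of_nonneg_left ht (abs_nonneg _)

theorem abs_partialSum_le {φ : ℕ → ℝ → ℝ} {M : ℝ}
    (hM : ∀ n, 1 ≤ n → ∀ᵐ t ∂(volume.restrict (Icc (0 : ℝ) 1)), |φ n t| ≤ M)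
    {f : ℝ → ℝ} (hf : IntegrableOn f (Icc (0 : ℝ) 1)) {x : ℝ} (hx : ∀ n, 1 ≤ n → |φ n x| ≤ M)
    (m : ℕ) : |partialSum φ f m x| ≤ m * M ^ 2 * ∫ t in Icc (0 : ℝ) 1, |f t| := by
  calc |partialSum φ f m x|
      ≤ ∑ n ∈ Finset.Icc 1 m, |fourierCoef φ f n * φ n x| := Finset.abs_sum_le_sum_abs _ _
    _ ≤ ∑ n ∈ Finset.Icc 1 m, (∫ t in Icc (0 : ℝ) 1, |f t|) * M * M := by
      refine Finset.sum_le_sum fun n hn => ?_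
      have hn1 := (Finset.mem_Icc.1 hn).1
      have h := abs_fourierCoef_le (hM n hn1) hf
      rw [abs_mul]
      exact mul_le_mul h (hx n hn1) (abs_nonneg _) ((abs_nonneg _).trans h)
    _ = m * M ^ 2 * ∫ t in Icc (0 : ℝ) 1, |f t| := by
      rw [Finset.sum_const, Nat.card_Icc, nsmul_eq_mul]
      push_cast [Nat.add_sub_cancel]
      ring

/-- Bochkarev's gluing lemma: if for each `i` there is `g_i` with `‖g_i‖_1 ≤ 2^{-i}`
and `m({x ∈ (0,1) : S*(g_i,x) > 2^i}) > α > 0`, then for a suitable subsequence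
`i_1 < i_2 < ⋯` the function `f = ∑_k g_{i_k}` is in `L¹[0,1]` and its Fourier series
diverges unboundedly on a set of positive measure. -/
theorem gluing_lemma (φ : ℕ → ℝ → ℝ) (M : ℝ)
    (hONS : IsONS φ) (hUB : UnifBounded φ M) (α : ℝ) (hα : 0 < α)
    (g : ℕ → ℝ → ℝ) (hgm : ∀ i, Measurable (g i))
    (hgi : ∀ i, IntegrableOn (g i) (Set.Icc (0:ℝ) 1))
    (hg1 : ∀ i : ℕ, (∫ t in Set.Icc (0:ℝ) 1, |g i t|) ≤ ((2:ℝ) ^ i)⁻¹)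
    (hgdiv : ∀ i : ℕ, ENNReal.ofReal α < volume {x ∈ Set.Ioo (0:ℝ) 1 |
      ∃ m : ℕ, 1 ≤ m ∧ (2:ℝ) ^ i < |partialSum φ (g i) m x|}) :
    ∃ idx : ℕ → ℕ, StrictMono idx ∧
      IntegrableOn (fun x => ∑' k, g (idx k) x) (Set.Icc (0:ℝ) 1) ∧
      0 < volume {x ∈ Set.Icc (0:ℝ) 1 | ∀ B : ℝ, ∃ m : ℕ, 1 ≤ m ∧
        B < |partialSum φ (fun x => ∑' k, g (idx k) x) m x|} := by
  obtain ⟨hφ, -⟩ := hONS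
  obtain ⟨-, hM⟩ := hUB
  set μ : Measure ℝ := volume.restrict (Icc (0 : ℝ) 1) with hμ
  have hs0 : Summable fun i => ∫ t in Icc (0 : ℝ) 1, |g i t| :=
    Summable.of_nonneg_of_le (fun i => integral_nonneg fun _ => abs_nonneg _)
      (fun i => (hg1 i).trans_eq (by simp)) summable_geometric_two
  have hs : ∀ idx : ℕ → ℕ, StrictMono idx →
      Summable fun k => ∫ t in Icc (0 : ℝ) 1, |g (idx k) t| := fun idx hidx =>
    hs0.comp_injective hidx.injective
  have hsum : ∀ idx : ℕ → ℕ, StrictMono idx → ∀ m x,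
      HasSum (fun k => partialSum φ (g (idx k)) m x)
        (partialSum φ (fun t => ∑' k, g (idx k) t) m x) := fun idx hidx =>
    hasSum_partialSum hφ hM (fun k => hgi (idx k)) (hs idx hidx)
  suffices h : ∃ idx : ℕ → ℕ, StrictMono idx ∧
      0 < μ {x | ∀ B : ℝ, ∃ m, B < |partialSum φ (fun t => ∑' k, g (idx k) t) m x|} by
    obtain ⟨idx, hidx, hpos⟩ := h
    refine ⟨idx, hidx, integrable_tsum_of_summable_integral_abs (fun k => hgi (idx k))
      (hs idx hidx), ?_⟩
    rw [hμ, Measure.restrict_apply' measurableSet_Icc] at hpos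
    refine hpos.trans_le (measure_mono ?_)
    rintro x ⟨hx, hxI⟩
    refine ⟨hxI, fun B => ?_⟩
    obtain ⟨m, hm⟩ := hx (max B 0)
    refine ⟨m, Nat.one_le_iff_ne_zero.2 ?_, (le_max_left _ _).trans_lt hm⟩
    rintro rfl
    simp [partialSum] at hm
  by_cases hb : ∀ i, ∀ᵐ x ∂μ, ∃ A, ∀ m, |partialSum φ (g i) m x| ≤ A
  · have hC : ∀ᵐ x ∂μ, ∀ i m, |partialSum φ (g i) m x| ≤ m * M ^ 2 * ((2 : ℝ) ^ i)⁻¹ := by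
      have hall : ∀ᵐ x ∂μ, ∀ n, 1 ≤ n → |φ n x| ≤ M :=
        ae_all_iff.2 fun n => eventually_imp_distrib_left.2 (hM n)
      filter_upwards [hall] with x hx i m
      exact (abs_partialSum_le hM (hgi i) hx m).trans
        (mul_le_mul_of_nonneg_left (hg1 i) (by positivity))
    obtain ⟨idx, hidx, hpos⟩ := exists_subseq_tsum_unbounded (μ := μ)
      (S := fun i m => partialSum φ (g i) m) (fun i m => measurable_partialSum hφ (g i) m) hC hb
      (ENNReal.ofReal_pos.2 hα).ne' fun i => (hgdiv i).trans_le (by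
        rw [hμ, Measure.restrict_apply' measurableSet_Icc]
        exact measure_mono fun x ⟨hx, m, _, hm⟩ => ⟨⟨m, hm⟩, Ioo_subset_Icc_self hx⟩)
    refine ⟨idx, hidx, ?_⟩
    simpa only [(hsum idx hidx _ _).tsum_eq] using hpos
  · by_contra! hcon
    obtain ⟨i, hi⟩ := not_forall.1 hb
    have hbdd : ∀ idx : ℕ → ℕ, StrictMono idx →
        ∀ᵐ x ∂μ, ∃ A, ∀ m, |partialSum φ (fun t => ∑' k, g (idx k) t) m x| ≤ A := by
      intro idx hidx
      rw [ae_iff, ← nonpos_iff_eq_zero]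
      simpa only [not_exists, not_forall, not_le] using hcon idx hidx
    have h1 : StrictMono fun k => k + i := fun _ _ h => Nat.add_lt_add_right h i
    have h2 : StrictMono fun k => k + 1 + i := fun _ _ h => by simpa using h
    refine hi ?_
    filter_upwards [hbdd _ h1, hbdd _ h2] with x ⟨A, hA⟩ ⟨A', hA'⟩
    refine ⟨A + A', fun m => ?_⟩
    have hsplit := ((hasSum_nat_add_iff' 1).2 (hsum _ h1 m x)).unique (hsum _ h2 m x)
    rw [Finset.sum_range_one, zero_add] at hsplit
    rw [← sub_eq_iff_eq_add'.2 (sub_eq_iff_eq_add.1 hsplit)]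
    exact (abs_sub _ _).trans (add_le_add (hA m) (hA' m))
end

section
/- Let h : (0,1] → ℝ be nonincreasing, let a > 0, and suppose there is a sequence t_k ↓ 0 with 2t_{k+1} < t_k and h(t_k) ≥ a·ln(e/t_k) for all k ∈ ℕ. Then for every real c > e^{1/a} one has ∫_{t_{k+1}}^{t_k} c^{h(t)} dt ≥ (t_k/2)·(e/t_k)^{a·ln c} for every k, this lower bound tends to +∞ as k → ∞, and consequently ∫_0^1 c^{h(t)} dt = +∞. -/
open MeasureTheory Set Filter

/-- The lower bound `(t/2)·(e/t)^p` rewritten with a single power of `e/t`. -/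
theorem half_mul_rpow_eq {t : ℝ} (ht : 0 < t) (p : ℝ) :
    (t / 2) * (Real.exp 1 / t) ^ p = (Real.exp 1 / 2) * (Real.exp 1 / t) ^ (p - 1) := by
  have hq : 0 < Real.exp 1 / t := by positivity
  rw [Real.rpow_sub_one hq.ne']
  have he : Real.exp 1 ≠ 0 := (Real.exp_pos 1).ne'
  field_simp

theorem tendsto_half_mul_rpow_atTop {t : ℕ → ℝ} (ht : ∀ k, 0 < t k)
    (htend : Tendsto t atTop (nhds 0)) {p : ℝ} (hp : 1 < p) :
    Tendsto (fun k => (t k / 2) * (Real.exp 1 / t k) ^ p) atTop atTop := by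
  simp_rw [fun k => half_mul_rpow_eq (ht k) p]
  have hwithin : Tendsto t atTop (nhdsWithin 0 (Ioi 0)) :=
    tendsto_nhdsWithin_iff.2 ⟨htend, Eventually.of_forall ht⟩
  have hdiv : Tendsto (fun k => Real.exp 1 / t k) atTop atTop := by
    simp_rw [div_eq_mul_inv]
    exact (tendsto_inv_nhdsGT_zero.comp hwithin).const_mul_atTop (Real.exp_pos 1)
  exact ((tendsto_rpow_atTop (sub_pos.2 hp)).comp hdiv).const_mul_atTop (by positivity)

/-- A function that is nonincreasing on `(0,1]` and at least `a·ln(e/v)` at `v` has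
`∫_u^v c^h ≥ (v/2)·(e/v)^{a ln c}` as soon as `2u < v`. -/
theorem ofReal_le_lintegral_rpow_of_antitoneOn {h : ℝ → ℝ} (hanti : AntitoneOn h (Ioc (0 : ℝ) 1))
    {a c u v : ℝ} (hu : 0 < u) (huv : 2 * u < v) (hv : v ≤ 1)
    (hlb : a * Real.log (Real.exp 1 / v) ≤ h v) (hc : 1 ≤ c) :
    ENNReal.ofReal ((v / 2) * (Real.exp 1 / v) ^ (a * Real.log c)) ≤
      ∫⁻ x in Ioc u v, ENNReal.ofReal (c ^ h x) := by
  have hv0 : 0 < v := by linarith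
  have hq : 0 < Real.exp 1 / v := by positivity
  have hpow : (Real.exp 1 / v) ^ (a * Real.log c) = c ^ (a * Real.log (Real.exp 1 / v)) := by
    rw [Real.rpow_def_of_pos hq, Real.rpow_def_of_pos (by linarith)]
    ring_nf
  calc ENNReal.ofReal ((v / 2) * (Real.exp 1 / v) ^ (a * Real.log c))
      ≤ ENNReal.ofReal (c ^ h v * (v - u)) := by
        rw [hpow, mul_comm]
        gcongr
        linarith
    _ = ∫⁻ _ in Ioc u v, ENNReal.ofReal (c ^ h v) := by
        rw [setLIntegral_const, Real.volume_Ioc, ENNReal.ofReal_mul (by positivity)]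
    _ ≤ ∫⁻ x in Ioc u v, ENNReal.ofReal (c ^ h x) := by
        refine setLIntegral_mono' measurableSet_Ioc fun x hx => ?_
        have hle : h v ≤ h x := hanti ⟨hu.trans hx.1, hx.2.trans hv⟩ ⟨hv0, hv⟩ hx.2
        gcongr

/-- If `h` is nonincreasing on `(0,1]`, `a > 0`, and `t_k ↓ 0` satisfies `2t_{k+1} < t_k`
and `h(t_k) ≥ a·ln(e/t_k)`, then for every `c > e^{1/a}` one has
`∫_{t_{k+1}}^{t_k} c^{h(t)} dt ≥ (t_k/2)·(e/t_k)^{a ln c}`, this lower bound tends to `+∞`,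
and hence `∫_0^1 c^{h(t)} dt = +∞`. -/
theorem integral_exponential_blowup (h : ℝ → ℝ) (hanti : AntitoneOn h (Set.Ioc (0:ℝ) 1))
    (a : ℝ) (ha : 0 < a) (t : ℕ → ℝ) (ht : ∀ k, t k ∈ Set.Ioc (0:ℝ) 1)
    (hhalf : ∀ k, 2 * t (k + 1) < t k) (htend : Tendsto t atTop (nhds 0))
    (hlb : ∀ k, a * Real.log (Real.exp 1 / t k) ≤ h (t k))
    (c : ℝ) (hc : Real.exp (1 / a) < c) :
    (∀ k, ENNReal.ofReal ((t k / 2) * (Real.exp 1 / t k) ^ (a * Real.log c)) ≤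
        ∫⁻ x in Set.Ioc (t (k + 1)) (t k), ENNReal.ofReal (c ^ (h x))) ∧
      Tendsto (fun k => (t k / 2) * (Real.exp 1 / t k) ^ (a * Real.log c))
        atTop atTop ∧
      (∫⁻ x in Set.Ioc (0:ℝ) 1, ENNReal.ofReal (c ^ (h x))) = ⊤ := by
  have hc1 : 1 < c := (Real.one_lt_exp_iff.2 (by positivity)).trans hc
  have hp : 1 < a * Real.log c := by
    have hlog : 1 / a < Real.log c := (Real.lt_log_iff_exp_lt (by linarith)).2 hc
    rwa [div_lt_iff₀' ha] at hlog
  have hbound := fun k => ofReal_le_lintegral_rpow_of_antitoneOn hanti (ht (k + 1)).1 (hhalf k)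
    (ht k).2 (hlb k) hc1.le
  have hlim := tendsto_half_mul_rpow_atTop (fun k => (ht k).1) htend hp
  refine ⟨hbound, hlim, top_unique ?_⟩
  refine le_of_tendsto' (ENNReal.tendsto_ofReal_atTop.comp hlim) fun k => (hbound k).trans ?_
  exact lintegral_mono_set (Ioc_subset_Ioc (ht (k + 1)).1.le (ht k).2)
end

section
/- Let C > 0, let E ⊆ [0,1] be a measurable set with 0 < m(E) ≤ 1, and let p : [0,1] → [1,∞) be a measurable exponent satisfying 1 ≤ p(x) ≤ 1 + C/ln(e/m(E)) for a.e. x ∈ E. Then (1/2)·m(E) ≤ ‖χ_E‖_{p(·)} ≤ 2e^C·m(E). -/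
open MeasureTheory Set Filter

/-- The modular of `χ_E / r` is an integral over `E` alone. -/
lemma lintegral_indicator_one_div_rpow {E : Set ℝ} (hE : MeasurableSet E)
    (hE01 : E ⊆ Set.Icc (0:ℝ) 1) {p : ℝ → ℝ} (hp1 : ∀ x ∈ Set.Icc (0:ℝ) 1, 1 ≤ p x) (r : ℝ) :
    (∫⁻ x in Set.Icc (0:ℝ) 1,
        ENNReal.ofReal ((|E.indicator (fun _ => (1:ℝ)) x| / r) ^ (p x))) =
      ∫⁻ x in E, ENNReal.ofReal (r⁻¹ ^ (p x)) := by
  have hEI : E ∩ Set.Icc (0:ℝ) 1 = E := inter_eq_left.mpr hE01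
  rw [← hEI, ← Measure.restrict_restrict hE, ← lintegral_indicator hE, hEI]
  refine setLIntegral_congr_fun measurableSet_Icc fun x hx => ?_
  by_cases hxE : x ∈ E
  · simp [hxE]
  · simp [hxE, Real.zero_rpow (zero_lt_one.trans_le (hp1 x hx)).ne']

/-- If `q - 1 ≤ C / log (e / m)` and `m ≤ r`, then `r⁻¹ ^ q ≤ e ^ C / r`. -/
lemma inv_rpow_le_exp_mul_inv {C m r q : ℝ} (hm : 0 < m) (hm1 : m ≤ 1) (hmr : m ≤ r)
    (hq1 : 1 ≤ q) (hq : q ≤ 1 + C / Real.log (Real.exp 1 / m)) :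
    r⁻¹ ^ q ≤ Real.exp C * r⁻¹ := by
  have hr : 0 < r := hm.trans_le hmr
  have hlog : Real.log (Real.exp 1 / m) = 1 - Real.log m := by
    rw [Real.log_div (Real.exp_ne_zero 1) hm.ne', Real.log_exp]
  have hlogm : Real.log m ≤ 0 := Real.log_nonpos hm.le hm1
  have hlogr : Real.log m ≤ Real.log r := Real.log_le_log hm hmr
  have hq' : (q - 1) * (1 - Real.log m) ≤ C := by
    rw [hlog] at hq
    exact (le_div_iff₀ (by linarith)).mp (by linarith)
  have hinv : r⁻¹ = Real.exp (-Real.log r) := by rw [Real.exp_neg, Real.exp_log hr]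
  rw [hinv, ← Real.exp_mul, ← Real.exp_add]
  exact Real.exp_le_exp.mpr (by nlinarith)

/-- If the exponent `p` satisfies `1 ≤ p(x) ≤ 1 + C/ln(e/m(E))` a.e. on `E`, then
`(1/2)·m(E) ≤ ‖χ_E‖_{p(·)} ≤ 2e^C·m(E)`. -/
theorem indicator_norm_two_sided_bound (C : ℝ) (hC : 0 < C)
    (E : Set ℝ) (hE : MeasurableSet E) (hE01 : E ⊆ Set.Icc (0:ℝ) 1)
    (hEpos : 0 < volume E)
    (p : ℝ → ℝ) (hpm : Measurable p) (hp1 : ∀ x ∈ Set.Icc (0:ℝ) 1, 1 ≤ p x)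
    (hpe : ∀ᵐ x ∂(volume.restrict E),
      p x ≤ 1 + C / Real.log (Real.exp 1 / (volume E).toReal)) :
    ENNReal.ofReal ((volume E).toReal / 2) ≤
        vpNorm p (E.indicator fun _ => (1:ℝ)) ∧
      vpNorm p (E.indicator fun _ => (1:ℝ)) ≤
        ENNReal.ofReal (2 * Real.exp C * (volume E).toReal) := by
  have hE1 : volume E ≤ 1 := (measure_mono hE01).trans (by simp)
  have hEtop : volume E ≠ ⊤ := (hE1.trans_lt ENNReal.one_lt_top).ne
  set m := (volume E).toReal
  have hm : 0 < m := ENNReal.toReal_pos hEpos.ne' hEtop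
  have hm1 : m ≤ 1 := ENNReal.toReal_mono ENNReal.one_ne_top hE1
  have hvol : volume E = ENNReal.ofReal m := (ENNReal.ofReal_toReal hEtop).symm
  constructor
  · refine le_sInf ?_
    rintro _ ⟨r, hr, rfl, hint⟩
    rw [lintegral_indicator_one_div_rpow hE hE01 hp1] at hint
    refine ENNReal.ofReal_le_ofReal ?_
    by_contra! hrm
    have hr1 : 1 ≤ r⁻¹ := (one_le_inv₀ hr).mpr (by linarith)
    have hle : ENNReal.ofReal (r⁻¹ * m) ≤ 1 := by
      calc ENNReal.ofReal (r⁻¹ * m) = ∫⁻ _ in E, ENNReal.ofReal r⁻¹ := by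
            rw [setLIntegral_const, hvol, ENNReal.ofReal_mul (by positivity)]
        _ ≤ ∫⁻ x in E, ENNReal.ofReal (r⁻¹ ^ (p x)) :=
            setLIntegral_mono' hE fun x hx => ENNReal.ofReal_le_ofReal
              (Real.self_le_rpow_of_one_le hr1 (hp1 x (hE01 hx)))
        _ ≤ 1 := hint
    rw [ENNReal.ofReal_le_one, inv_mul_le_iff₀ hr] at hle
    linarith
  · have hexp : 1 ≤ Real.exp C := Real.one_le_exp hC.le
    have hmr : m ≤ 2 * Real.exp C * m := by nlinarith
    refine sInf_le ⟨2 * Real.exp C * m, by positivity, rfl, ?_⟩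
    rw [lintegral_indicator_one_div_rpow hE hE01 hp1]
    calc ∫⁻ x in E, ENNReal.ofReal ((2 * Real.exp C * m)⁻¹ ^ (p x))
        ≤ ∫⁻ _ in E, ENNReal.ofReal (Real.exp C * (2 * Real.exp C * m)⁻¹) := by
          refine lintegral_mono_ae ?_
          filter_upwards [hpe, ae_restrict_mem hE] with x hx hxE
          exact ENNReal.ofReal_le_ofReal
            (inv_rpow_le_exp_mul_inv hm hm1 hmr (hp1 x (hE01 hxE)) hx)
      _ = ENNReal.ofReal (1 / 2) := by
          rw [setLIntegral_const, hvol, ← ENNReal.ofReal_mul (by positivity)]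
          congr 1
          field_simp
      _ ≤ 1 := ENNReal.ofReal_le_one.mpr (by norm_num)
end

section
/- For every p ∈ P_ln there exist a measure preserving transformation ω : [0,1] → [0,1] and a constant δ > 0 such that ‖χ_{(a,b)}‖_{p'(ω(·))} ≥ δ for every interval (a,b) ⊆ (0,1), where p'(t) = p(t)/(p(t) − 1) is the conjugate exponent and χ_{(a,b)} is the characteristic function of (a,b). -/
open MeasureTheory Set Filter

/-- `ω : [0,1] → [0,1]` is a measure preserving transformation. -/
def MeasurePreserving01 (ω : ℝ → ℝ) : Prop :=
  Set.MapsTo ω (Set.Icc (0:ℝ) 1) (Set.Icc (0:ℝ) 1) ∧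
    MeasurePreserving ω (volume.restrict (Set.Icc (0:ℝ) 1))
      (volume.restrict (Set.Icc (0:ℝ) 1))

/-- `p ∈ P_ln`: `p : [0,1] → [1,∞)` is increasing, `p(0) = 1`, `p(t) > 1` for `t ∈ (0,1]`
and `liminf_{t→0+} (p(t)-1) ln(e/t) < ∞` (i.e. the quantity is frequently bounded near `0+`). -/
def MemPln (p : ℝ → ℝ) : Prop :=
  MonotoneOn p (Set.Icc (0:ℝ) 1) ∧ p 0 = 1 ∧ (∀ t ∈ Set.Ioc (0:ℝ) 1, 1 < p t) ∧
    ∃ C : ℝ, ∃ᶠ t in nhdsWithin 0 (Set.Ioi (0:ℝ)),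
      (p t - 1) * Real.log (Real.exp 1 / t) ≤ C

open ProbabilityTheory Topology in
/-- The **probability integral transform**: the distribution function of an atomless probability
measure on `ℝ` pushes this measure forward to the uniform distribution on `[0,1]`. -/
theorem measurePreserving_cdf (ν : Measure ℝ) [IsProbabilityMeasure ν] [NullSingletonClass ν] :
    MeasurePreserving (cdf ν) ν (volume.restrict (Icc (0:ℝ) 1)) := by
  have hmeas : Measurable (cdf ν) := (monotone_cdf ν).measurable
  have hcont : Continuous (cdf ν) := by
    rw [continuous_iff_continuousAt]
    intro x
    rw [(monotone_cdf ν).continuousAt_iff_leftLim_eq_rightLim, StieltjesFunction.rightLim_eq]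
    have h := (cdf ν).measure_singleton x
    rw [measure_cdf, measure_singleton] at h
    have h1 := ENNReal.ofReal_eq_zero.1 h.symm
    exact le_antisymm ((monotone_cdf ν).leftLim_le le_rfl) (by linarith)
  have hsurj : ∀ v ∈ Ioo (0:ℝ) 1, ∃ s, cdf ν s = v := fun v hv =>
    mem_range_of_exists_le_of_exists_ge hcont
      (((tendsto_cdf_atBot ν).eventually (eventually_le_nhds hv.1)).exists)
      (((tendsto_cdf_atTop ν).eventually (eventually_ge_nhds hv.2)).exists)
  refine ⟨hmeas, ?_⟩
  have := Measure.isProbabilityMeasure_map (μ := ν) hmeas.aemeasurable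
  refine Measure.ext_of_Iic _ _ fun u => ?_
  rw [Measure.map_apply hmeas measurableSet_Iic, Measure.restrict_apply measurableSet_Iic]
  have hset : Iic u ∩ Icc (0:ℝ) 1 = Icc 0 (min u 1) := by
    ext x; simp only [mem_inter_iff, mem_Iic, mem_Icc, le_min_iff]; tauto
  rw [hset, Real.volume_Icc, sub_zero]
  rcases lt_or_ge u 0 with hu | hu
  · have : cdf ν ⁻¹' Iic u = ∅ := by
      ext x
      simpa using hu.trans_le (cdf_nonneg ν x)
    rw [this, measure_empty, ENNReal.ofReal_of_nonpos ((min_le_left _ _).trans hu.le)]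
  rcases le_or_gt 1 u with hu1 | hu1
  · have : cdf ν ⁻¹' Iic u = univ := by
      ext x
      simpa using (cdf_le_one ν x).trans hu1
    rw [this, measure_univ, min_eq_right hu1, ENNReal.ofReal_one]
  rw [min_eq_left hu1.le]
  apply le_antisymm
  · have hle : ∀ v ∈ Ioo u 1, ν (cdf ν ⁻¹' Iic u) ≤ ENNReal.ofReal v := fun v hv => by
      obtain ⟨s, hs⟩ := hsurj v ⟨hu.trans_lt hv.1, hv.2⟩
      rw [← hs, ofReal_cdf]
      refine measure_mono fun x hx => ?_
      by_contra hxs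
      have := monotone_cdf ν (not_le.1 hxs).le
      have hx' : cdf ν x ≤ u := hx
      linarith [hv.1]
    have hlim : Tendsto (fun v => ENNReal.ofReal v) (𝓝[>] u) (𝓝 (ENNReal.ofReal u)) :=
      (ENNReal.continuous_ofReal.tendsto u).mono_left nhdsWithin_le_nhds
    refine ge_of_tendsto hlim ?_
    filter_upwards [Ioo_mem_nhdsGT hu1] with v hv using hle v hv
  · rcases hu.eq_or_lt with rfl | hu0
    · simp
    obtain ⟨s, hs⟩ := hsurj u ⟨hu0, hu1⟩
    conv_lhs => rw [← hs]
    rw [ofReal_cdf]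
    exact measure_mono fun x hx => (monotone_cdf ν hx).trans hs.le

open ProbabilityTheory in
/-- Given a decreasing sequence of sets with null intersection, some measure preserving
transformation of `[0,1]` sends (almost) each of them into the initial segment whose length is the
measure of the set. -/
theorem exists_measurePreserving01_le_measure (E : ℕ → Set ℝ) (hE : ∀ k, MeasurableSet (E k))
    (hanti : Antitone E) (hnull : volume.restrict (Icc (0:ℝ) 1) (⋂ k, E k) = 0) :
    ∃ ω : ℝ → ℝ, MeasurePreserving01 ω ∧ ∀ k, ∀ᵐ x ∂volume.restrict (Icc (0:ℝ) 1),
      x ∈ E k → ω x ≤ (volume.restrict (Icc (0:ℝ) 1)).real (E k) := by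
  classical
  set μ := volume.restrict (Icc (0:ℝ) 1) with hμ
  have : IsProbabilityMeasure μ := ⟨by simp [hμ]⟩
  set E' : ℕ → Set ℝ := fun k => E k \ ⋂ j, E j with hE'
  have hE'm : ∀ k, MeasurableSet (E' k) := fun k => (hE k).diff (MeasurableSet.iInter hE)
  have hanti' : Antitone E' := fun i j h => sdiff_subset_sdiff_left (hanti h)
  have hex : ∀ x, ∃ k, x ∉ E' k := by
    intro x
    by_contra! h
    exact (h 0).2 (mem_iInter.2 fun j => (h j).1)
  set L : ℝ → ℕ := fun x => Nat.find (hex x) with hL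
  have hLm : Measurable L := measurable_find hex fun k => (hE'm k).compl
  have hLiff : ∀ x k, k < L x ↔ x ∈ E' k := by
    intro x k
    rw [hL, Nat.lt_find_iff]
    refine ⟨fun h => not_not.1 (h k le_rfl), fun h m hm => not_not.2 (hanti' hm h)⟩
  set g : ℝ → ℝ := fun x => x / 2 - L x with hg
  have hgm : Measurable g := by
    have : Measurable fun x => (L x : ℝ) := measurable_from_nat.comp hLm
    fun_prop
  have := Measure.isProbabilityMeasure_map (μ := μ) hgm.aemeasurable
  have : NullSingletonClass (μ.map g) := ⟨fun c => by
    rw [Measure.map_apply hgm (measurableSet_singleton c)]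
    refine Countable.measure_zero ((countable_range fun n : ℕ => 2 * (c + n)).mono ?_) _
    intro x hx
    have hx' : x / 2 - L x = c := hx
    exact ⟨L x, by simp only; linarith⟩⟩
  refine ⟨cdf (μ.map g) ∘ g, ⟨fun x _ => ⟨cdf_nonneg _ _, cdf_le_one _ _⟩,
    (measurePreserving_cdf (μ.map g)).comp ⟨hgm, rfl⟩⟩, fun k => ?_⟩
  have hI : ∀ᵐ x ∂μ, x ∈ Icc (0:ℝ) 1 := ae_restrict_mem measurableSet_Icc
  filter_upwards [hI, compl_mem_ae_iff.2 hnull] with x hx hxn hxE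
  have hxL := (hLiff x k).2 ⟨hxE, hxn⟩
  rw [Function.comp_apply, cdf_eq_real, map_measureReal_apply hgm measurableSet_Iic]
  refine ENNReal.toReal_mono (measure_ne_top _ _) (measure_mono_ae ?_)
  filter_upwards [hI] with y hy hyx
  have hyx' : y / 2 - L y ≤ x / 2 - L x := hyx
  refine ((hLiff y k).1 ?_).1
  have h1 : ((k + 1 : ℕ) : ℝ) ≤ L x := by exact_mod_cast hxL
  push_cast at h1
  have h2 : (k : ℝ) < L y := by linarith [hx.2, hy.1]
  exact_mod_cast h2

/-- A property that holds frequently at `0+` holds along a positive sequence that decays at least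
geometrically and stays below a prescribed positive sequence. -/
theorem exists_seq_lt_and_le_half {P : ℝ → Prop} (hP : ∃ᶠ t in nhdsWithin 0 (Ioi (0:ℝ)), P t)
    (d : ℕ → ℝ) (hd : ∀ k, 0 < d k) :
    ∃ t : ℕ → ℝ, ∀ k, 0 < t k ∧ t k < d k ∧ P (t k) ∧ t (k + 1) ≤ t k / 2 := by
  have hex : ∀ ε : ℝ, ∃ t, 0 < ε → 0 < t ∧ t < ε ∧ P t := by
    intro ε
    by_cases hε : 0 < ε
    · obtain ⟨t, hPt, ht⟩ := (hP.and_eventually (Ioo_mem_nhdsGT hε)).exists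
      exact ⟨t, fun _ => ⟨ht.1, ht.2, hPt⟩⟩
    · exact ⟨0, fun h => absurd h hε⟩
  choose f hf using hex
  let t : ℕ → ℝ := fun k => Nat.rec (f (d 0)) (fun n s => f (min (s / 2) (d (n + 1)))) k
  have hsucc : ∀ k, t (k + 1) = f (min (t k / 2) (d (k + 1))) := fun _ => rfl
  have hpos : ∀ k, 0 < t k := by
    intro k
    induction k with
    | zero => exact (hf _ (hd 0)).1
    | succ n ih => rw [hsucc]; exact (hf _ (lt_min (half_pos ih) (hd _))).1
  have hstep : ∀ k, t (k + 1) < min (t k / 2) (d (k + 1)) ∧ P (t (k + 1)) := fun k => by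
    rw [hsucc]
    exact (hf _ (lt_min (half_pos (hpos k)) (hd _))).2
  refine ⟨t, fun k => ⟨hpos k, ?_, ?_, ((hstep k).1.trans_le (min_le_left _ _)).le⟩⟩
  · cases k with
    | zero => exact (hf _ (hd 0)).2.1
    | succ n => exact (hstep n).1.trans_le (min_le_right _ _)
  · cases k with
    | zero => exact (hf _ (hd 0)).2.2
    | succ n => exact (hstep n).2

/-- If the lengths of intervals at least halve at each step, the tail union starting at an interval
has at most twice its length. -/
theorem volume_iUnion_Ioo_le {c t : ℕ → ℝ} (ht : ∀ k, 0 ≤ t k) (hhalf : ∀ k, t (k + 1) ≤ t k / 2)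
    (k : ℕ) :
    volume (⋃ j, Ioo (c (k + j)) (c (k + j) + t (k + j) / 2)) ≤ ENNReal.ofReal (t k) := by
  have hle : ∀ j, t (k + j) / 2 ≤ t k / 2 / 2 ^ j := by
    intro j
    induction j with
    | zero => simp
    | succ n ih =>
      have := hhalf (k + n)
      rw [pow_succ, ← div_div, ← add_assoc]
      linarith
  calc volume (⋃ j, Ioo (c (k + j)) (c (k + j) + t (k + j) / 2))
      ≤ ∑' j, volume (Ioo (c (k + j)) (c (k + j) + t (k + j) / 2)) := measure_iUnion_le _
    _ ≤ ∑' j : ℕ, ENNReal.ofReal (t k / 2 / 2 ^ j) := by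
        refine ENNReal.tsum_le_tsum fun j => ?_
        rw [Real.volume_Ioo, add_sub_cancel_left]
        exact ENNReal.ofReal_le_ofReal (hle j)
    _ = ENNReal.ofReal (t k) := by
        have h := hasSum_geometric_two' (t k)
        rw [← ENNReal.ofReal_tsum_of_nonneg (fun j => ?_) h.summable, h.tsum_eq]
        have := ht k
        positivity

/-- Lower bound for the norm of the indicator of an interval that contains a not too small set on
which `ω` takes values in `(0,t]`, where `(p(t)-1) ln(e/t) ≤ C`. -/
theorem ofReal_exp_le_vpNorm_indicator {p ω : ℝ → ℝ} {C t a b : ℝ} {S : Set ℝ}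
    (hmono : MonotoneOn p (Icc (0:ℝ) 1)) (hp1 : ∀ t ∈ Ioc (0:ℝ) 1, 1 < p t)
    (ht0 : 0 < t) (ht1 : t < 1) (hC : (p t - 1) * Real.log (Real.exp 1 / t) ≤ C)
    (hS : MeasurableSet S) (hSI : S ⊆ Icc 0 1) (hSab : S ⊆ Ioo a b)
    (hvol : ENNReal.ofReal (t / 2) ≤ volume S)
    (hω : ∀ᵐ x ∂volume.restrict (Icc (0:ℝ) 1), x ∈ S → ω x ∈ Ioc 0 t) :
    ENNReal.ofReal (Real.exp (-(2 * C))) ≤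
      vpNorm (fun x => p (ω x) / (p (ω x) - 1)) ((Ioo a b).indicator fun _ => (1:ℝ)) := by
  have hlog : 0 < Real.log (Real.exp 1 / t) := by
    refine Real.log_pos ((one_lt_div ht0).2 (ht1.trans ?_))
    linarith [Real.exp_one_gt_d9]
  have hpt : 0 < p t - 1 := sub_pos.2 (hp1 t ⟨ht0, ht1.le⟩)
  have hC0 : 0 < C := (mul_pos hpt hlog).trans_le hC
  refine le_sInf ?_
  rintro _ ⟨r, hr, rfl, hint⟩
  refine ENNReal.ofReal_le_ofReal ?_
  by_contra! hlt
  refine absurd hint (not_le.2 ?_)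
  have hexp : Real.exp (2 * C) ≤ 1 / r := by
    rw [le_div_iff₀ hr]
    calc Real.exp (2 * C) * r ≤ Real.exp (2 * C) * Real.exp (-(2 * C)) := by gcongr
      _ = 1 := by rw [← Real.exp_add]; simp
  have hone : 1 ≤ Real.exp (2 * C) := Real.one_le_exp (by positivity)
  have hbound : ∀ᵐ x ∂volume.restrict (Icc (0:ℝ) 1), x ∈ S →
      ENNReal.ofReal ((Real.exp 1 / t) ^ 2) ≤
        ENNReal.ofReal ((|(Ioo a b).indicator (fun _ => (1:ℝ)) x| / r) ^
          (p (ω x) / (p (ω x) - 1))) := by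
    filter_upwards [hω] with x hx hxS
    obtain ⟨h0, hle⟩ := hx hxS
    rw [indicator_of_mem (hSab hxS), abs_one]
    refine ENNReal.ofReal_le_ofReal ?_
    have hp1x := hp1 _ ⟨h0, hle.trans ht1.le⟩
    have hpx : p (ω x) ≤ p t := hmono ⟨h0.le, hle.trans ht1.le⟩ ⟨ht0.le, ht1.le⟩ hle
    have hq : Real.log (Real.exp 1 / t) / C ≤ p (ω x) / (p (ω x) - 1) := by
      rw [div_le_div_iff₀ hC0 (sub_pos.2 hp1x)]
      nlinarith
    calc (Real.exp 1 / t) ^ 2 = Real.exp (2 * C) ^ (Real.log (Real.exp 1 / t) / C) := by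
          rw [← Real.exp_mul, show 2 * C * (Real.log (Real.exp 1 / t) / C) =
            Real.log (Real.exp 1 / t) * (2 : ℕ) by push_cast; field_simp,
            Real.exp_mul, Real.exp_log (by positivity), Real.rpow_natCast]
      _ ≤ Real.exp (2 * C) ^ (p (ω x) / (p (ω x) - 1)) :=
          Real.rpow_le_rpow_of_exponent_le hone hq
      _ ≤ (1 / r) ^ (p (ω x) / (p (ω x) - 1)) :=
          Real.rpow_le_rpow (by positivity) hexp
            (div_nonneg (by linarith) (by linarith))
  calc (1 : ENNReal) < ENNReal.ofReal ((Real.exp 1 / t) ^ 2 * (t / 2)) := by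
        rw [← ENNReal.ofReal_one, ENNReal.ofReal_lt_ofReal_iff (by positivity)]
        rw [show (Real.exp 1 / t) ^ 2 * (t / 2) = Real.exp 1 ^ 2 / (2 * t) by field_simp,
          one_lt_div (by positivity)]
        nlinarith [Real.exp_one_gt_d9]
    _ = ENNReal.ofReal ((Real.exp 1 / t) ^ 2) * ENNReal.ofReal (t / 2) :=
        ENNReal.ofReal_mul (by positivity)
    _ ≤ ENNReal.ofReal ((Real.exp 1 / t) ^ 2) * volume S := by gcongr
    _ = ∫⁻ _ in S, ENNReal.ofReal ((Real.exp 1 / t) ^ 2) := by rw [setLIntegral_const]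
    _ ≤ ∫⁻ x in S, ENNReal.ofReal ((|(Ioo a b).indicator (fun _ => (1:ℝ)) x| / r) ^
          (p (ω x) / (p (ω x) - 1))) := by
        refine lintegral_mono_ae ?_
        filter_upwards [ae_restrict_of_ae_restrict_of_subset hSI hbound, ae_restrict_mem hS]
          with x hx hxS using hx hxS
    _ ≤ _ := lintegral_mono_set hSI

/-- For `p ∈ P_ln` there are a measure preserving `ω : [0,1] → [0,1]` and `δ > 0` with
`‖χ_{(a,b)}‖_{p'(ω(·))} ≥ δ` for every interval `(a,b) ⊆ (0,1)`. -/
theorem indicator_intervals_uniformly_bounded_below (p : ℝ → ℝ) (hp : MemPln p) :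
    ∃ ω : ℝ → ℝ, MeasurePreserving01 ω ∧ ∃ δ : ℝ, 0 < δ ∧
      ∀ a b : ℝ, 0 ≤ a → a < b → b ≤ 1 →
        ENNReal.ofReal δ ≤
          vpNorm (fun t => p (ω t) / (p (ω t) - 1))
            ((Set.Ioo a b).indicator fun _ => (1:ℝ)) := by
  obtain ⟨hmono, -, hp1, C, hC⟩ := hp
  obtain ⟨e, he⟩ := exists_surjective_nat (ℚ × ℕ)
  obtain ⟨t, ht⟩ := exists_seq_lt_and_le_half hC (fun k => 1 / ((e k).2 + 1 : ℝ))
    fun k => by positivity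
  have ht0 : ∀ k, 0 ≤ t k := fun k => (ht k).1.le
  set c : ℕ → ℝ := fun k => (e k).1
  set J : ℕ → Set ℝ := fun k => Ioo (c k) (c k + t k / 2)
  set E : ℕ → Set ℝ := fun k => ⋃ j, J (k + j)
  have hEm : ∀ k, MeasurableSet (E k) := fun k => .iUnion fun _ => measurableSet_Ioo
  have hEanti : Antitone E := by
    refine antitone_nat_of_succ_le fun k => iUnion_subset fun j => ?_
    rw [show k + 1 + j = k + (j + 1) by ring]
    exact subset_iUnion (fun j => J (k + j)) (j + 1)
  have hEle : ∀ k, volume.restrict (Icc (0:ℝ) 1) (E k) ≤ ENNReal.ofReal (t k) := fun k =>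
    (Measure.restrict_apply_le _ _).trans
      (volume_iUnion_Ioo_le ht0 (fun k => (ht k).2.2.2) k)
  have hlim : Tendsto t atTop (nhds 0) := by
    have hgeom : ∀ k, t k ≤ t 0 * (1 / 2) ^ k := by
      intro k
      induction k with
      | zero => simp
      | succ n ih => rw [pow_succ]; linarith [(ht n).2.2.2]
    refine squeeze_zero ht0 hgeom ?_
    simpa using (tendsto_pow_atTop_nhds_zero_of_lt_one (r := (1 / 2 : ℝ))
      (by norm_num) (by norm_num)).const_mul (t 0)
  have hnull : volume.restrict (Icc (0:ℝ) 1) (⋂ k, E k) = 0 := by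
    have hlim' : Tendsto (fun k => ENNReal.ofReal (t k)) atTop (nhds 0) := by
      simpa using ENNReal.tendsto_ofReal hlim
    exact le_antisymm (ge_of_tendsto' hlim' fun k =>
      (measure_mono (iInter_subset E k)).trans (hEle k)) zero_le
  obtain ⟨ω, hω, hωE⟩ := exists_measurePreserving01_le_measure E hEm hEanti hnull
  refine ⟨ω, hω, Real.exp (-(2 * C)), Real.exp_pos _, fun a b ha hab hb => ?_⟩
  obtain ⟨q, hqa, hqb⟩ := exists_rat_btwn hab
  obtain ⟨n, hn⟩ := exists_nat_one_div_lt (sub_pos.2 hqb)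
  obtain ⟨k, hk⟩ := he (q, n)
  obtain ⟨htpos, htlt, htC, -⟩ := ht k
  have hck : c k = q := by simp [c, hk]
  simp only [hk] at htlt
  have hn1 : 1 / (n + 1 : ℝ) ≤ 1 := by
    rw [div_le_one (by positivity)]
    linarith [n.cast_nonneg (α := ℝ)]
  have hJab : J k ⊆ Ioo a b := by
    simp only [J, hck]
    exact Ioo_subset_Ioo hqa.le (by linarith)
  refine ofReal_exp_le_vpNorm_indicator hmono hp1 htpos (htlt.trans_le hn1) htC (S := J k)
    measurableSet_Ioo (hJab.trans (Ioo_subset_Icc_self.trans (Icc_subset_Icc ha hb))) hJab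
    (by simp [J]) ?_
  have hpos : ∀ᵐ x ∂volume.restrict (Icc (0:ℝ) 1), 0 < ω x := by
    refine hω.2.quasiMeasurePreserving.ae (p := fun y => 0 < y) ?_
    have hne : ∀ᵐ y ∂volume.restrict (Icc (0:ℝ) 1), y ≠ 0 :=
      compl_mem_ae_iff.2 (measure_singleton 0)
    filter_upwards [ae_restrict_mem measurableSet_Icc, hne] with y hy hy0
    exact hy.1.lt_of_ne' hy0
  filter_upwards [hωE k, hpos] with x hx hx0 hxJ
  exact ⟨hx0, (hx (subset_iUnion (fun j => J (k + j)) 0 hxJ)).trans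
    (ENNReal.toReal_le_of_le_ofReal htpos.le (hEle k))⟩
end

section
/- For every f ∈ L¹[0,1] there exists a measurable function p : [0,1] → (1,∞) (i.e. p(x) > 1 everywhere) such that ∫_0^1 |f(x)|^{p(x)} dx < ∞; equivalently, L¹[0,1] = ⋃ L^{p(·)}[0,1], where the union is taken over all measurable exponents p with p(x) > 1 a.e. -/
open MeasureTheory Set Filter

/-- The exponent `1 + 1 / (1 + |log t|)` exceeds `1` so slightly that it raises `t` by at most
a factor `exp 1`. -/
theorem Real.rpow_one_add_inv_one_add_abs_log_le {t : ℝ} (ht : 0 ≤ t) :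
    t ^ (1 + (1 + |Real.log t|)⁻¹) ≤ Real.exp 1 * t := by
  have hpos : 0 < 1 + |Real.log t| := by positivity
  rcases ht.eq_or_lt with rfl | ht
  · simp [Real.zero_rpow]
  · rw [Real.rpow_add ht, Real.rpow_one, mul_comm, Real.rpow_def_of_pos ht]
    gcongr
    rw [← div_eq_mul_inv, div_le_one hpos]
    linarith [le_abs_self (Real.log t)]

/-- Every `f ∈ L¹[0,1]` lies in some variable exponent space `L^{p(·)}[0,1]` with
`p(x) > 1` everywhere: there is a measurable `p : [0,1] → (1,∞)` with
`∫_0^1 |f(x)|^{p(x)} dx < ∞`. -/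
theorem L1_is_union_of_variable_exponent_spaces (f : ℝ → ℝ)
    (hfm : Measurable f) (hfi : IntegrableOn f (Set.Icc (0:ℝ) 1)) :
    ∃ p : ℝ → ℝ, Measurable p ∧ (∀ x, 1 < p x) ∧
      (∫⁻ x in Set.Icc (0:ℝ) 1, ENNReal.ofReal (|f x| ^ (p x))) < ⊤ := by
  refine ⟨fun x => 1 + (1 + |Real.log (|f x|)|)⁻¹, by fun_prop, fun x => ?_, ?_⟩
  · have : 0 < (1 + |Real.log (|f x|)|)⁻¹ := by positivity
    linarith
  · refine lt_of_le_of_lt (lintegral_mono fun x => ?_)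
      (hfi.abs.const_mul (Real.exp 1)).lintegral_lt_top
    exact ENNReal.ofReal_le_ofReal
      (Real.rpow_one_add_inv_one_add_abs_log_le (abs_nonneg (f x)))
end
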